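/- arXiv:2512.24913 — 6 statements merged into one kernel-verified Lean document; each statement's English description precedes it below -/
import Mathlib

section
/- Let d ≥ 3 and let w : (0,∞) → (0,∞) be a function decreasing to zero as t → +∞ which satisfies lim_{δ→0⁺} sup_{t≥1} w(t)/w((1+δ)t) = 1, and suppose the series ∑_{ν=1}^∞ ν^{d-1} w(2^ν) converges. Then for every ε > 0 there exists a full-rank lattice Λ ⊂ ℝ^d such that the inequality Π^d(x) ≤ (1+ε) w(|x|) holds for infinitely many x ∈ Λ, while the inequality Π^d(x) ≤ (1−ε) w(|x|) holds for only finitely many x ∈ Λ. -/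
/-!
Write `d = n + 3` and let `‖·‖` be the sup-norm.

*Scaling.* It suffices to find a lattice `A ℤ^d`, with `‖A y‖ ≥ ‖y‖`, on which `Π(x) ≤ c w(‖x‖)` has
finitely many solutions for some `c > 0`, while `Π(x) ≤ C w(‖x‖)` has infinitely many for some `C`.
In the family of lattices `l A ℤ^d`, the inequality `Π(x) ≤ w(‖x‖)` then has infinitely many
solutions for small `l` and finitely many for large `l`. Hence there is a step `l, (1 + δ) l` of a
geometric progression at which the behaviour changes, and since by regularity `w` varies slowly
over such a step, the lattice `l A ℤ^d` is as required (`exists_scaled_lattice`).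

*The matrix.* `A` is a large multiple of the identity, which gives `‖A y‖ ≥ ‖y‖`, plus a matrix whose
entries are independent and uniform in `[1, 2]`, except for one row that starts with `-1, α`. The
real `α` has exceptionally good rational approximations `p / q`, along an infinite sequence and with
`q α - p` of prescribed size about `w(q) / q^(d-1)`, and otherwise `|α b - a|` is at least
a constant times `1 / |b|` (`exists_alpha`). At the multiples of `(p, q, 0, …, 0)` the product of the
coordinates therefore has exact order `w`, whatever the random entries are (`exists_lattice_order`).

*The other integer points.* Almost surely, only finitely many of them satisfy `Π(A y) ≤ w(‖y‖)`
(`exists_coeff`). Consider `y` with `‖y‖` of size `T = 2^ν`. The coordinate of `A y` at the position of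
the largest entry of `y` is at least `T`, so the product of the others is at most `w(T) / T`. Markov's
inequality is applied to the product of their powers with exponent `-s`, `s = ν / (ν + 1)`. With this
exponent the mean of an ordinary row is `O(ν / T)`, since `|x|^(-s)` has integral `O(ν)` near `0`,
and replacing `s` by `1` costs only constants. The special row is summed over `y 0`
first: the sum over the shell of its mean is `O(ν T^(d-1))` (`sum_shell_le`), where for points
`(a, b, 0, …, 0)` the lower bound for `|α b - a|` replaces averaging; there are only `O(T²)` such points,
which is harmless as `d ≥ 3`. Together, the probability that the shell contains a bad point is
`O(ν^(d-1) w(2^ν))`, and the Borel–Cantelli lemma applies.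
-/

open MeasureTheory Filter Set

noncomputable section

/-- A full-rank lattice in `ℝ^d`: the set of integer linear combinations of a basis of `ℝ^d`. -/
def IsFullLattice {d : ℕ} (Λ : Set (Fin d → ℝ)) : Prop :=
  ∃ b : Fin d → (Fin d → ℝ), LinearIndependent ℝ b ∧
    Λ = {x | ∃ z : Fin d → ℤ, x = ∑ i, (z i : ℝ) • b i}

/-! ### Regularity of the weight -/

/-- The regularity hypothesis in pointwise form: `w` varies by a factor at most `1 + η` over a
sufficiently short multiplicative step. Since `sSup` of an unbounded set is `0`, closeness of the
supremum to `1` also forces boundedness. -/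
lemma weight_step {w : ℝ → ℝ} (hw_pos : ∀ t, 0 < t → 0 < w t)
    (hw_reg : Tendsto (fun δ : ℝ => sSup {r : ℝ | ∃ t : ℝ, 1 ≤ t ∧ r = w t / w ((1 + δ) * t)})
      (nhdsWithin 0 (Set.Ioi 0)) (nhds 1)) {η : ℝ} (hη : 0 < η) :
    ∀ᶠ δ in nhdsWithin (0 : ℝ) (Set.Ioi 0), ∀ t, 1 ≤ t → w t ≤ (1 + η) * w ((1 + δ) * t) := by
  have h1 := hw_reg.eventually (Ioo_mem_nhds (show (0 : ℝ) < 1 by norm_num)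
    (show (1 : ℝ) < 1 + η by linarith))
  filter_upwards [h1, self_mem_nhdsWithin] with δ hδ hpos t ht
  have hδ0 : (0 : ℝ) < δ := hpos
  have hbdd : BddAbove {r : ℝ | ∃ t : ℝ, 1 ≤ t ∧ r = w t / w ((1 + δ) * t)} := by
    by_contra hb
    rw [Real.sSup_of_not_bddAbove hb] at hδ
    exact lt_irrefl _ hδ.1
  have h2 := le_csSup hbdd ⟨t, ht, rfl⟩
  have h3 : 0 < w ((1 + δ) * t) := hw_pos _ (by positivity)
  rw [div_le_iff₀ h3] at h2
  exact h2.trans (mul_le_mul_of_nonneg_right hδ.2.le h3.le)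

lemma weight_doubling {w : ℝ → ℝ} (hw_pos : ∀ t, 0 < t → 0 < w t)
    (hw_anti : AntitoneOn w (Set.Ioi 0))
    (hw_reg : Tendsto (fun δ : ℝ => sSup {r : ℝ | ∃ t : ℝ, 1 ≤ t ∧ r = w t / w ((1 + δ) * t)})
      (nhdsWithin 0 (Set.Ioi 0)) (nhds 1)) {M : ℝ} (hM : 0 < M) :
    ∃ C : ℝ, 1 ≤ C ∧ ∀ t, 1 ≤ t → w t ≤ C * w (M * t) := by
  obtain ⟨δ, hδ, hpos⟩ := ((weight_step hw_pos hw_reg one_pos).and self_mem_nhdsWithin).exists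
  have hδ0 : (0 : ℝ) < δ := hpos
  have key : ∀ n : ℕ, ∀ t, 1 ≤ t → w t ≤ 2 ^ n * w ((1 + δ) ^ n * t) := by
    intro n
    induction n with
    | zero => intro t _; simp
    | succ n ih =>
      intro t ht
      have h1 := ih t ht
      have h2 := hδ ((1 + δ) ^ n * t) (one_le_mul_of_one_le_of_one_le (one_le_pow₀ (by linarith)) ht)
      have h3 : (1 + δ) * ((1 + δ) ^ n * t) = (1 + δ) ^ (n + 1) * t := by ring
      rw [h3] at h2
      calc w t ≤ 2 ^ n * w ((1 + δ) ^ n * t) := h1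
        _ ≤ 2 ^ n * ((1 + 1) * w ((1 + δ) ^ (n + 1) * t)) := by gcongr
        _ = _ := by ring
  obtain ⟨n, hn⟩ := pow_unbounded_of_one_lt M (show 1 < 1 + δ by linarith)
  refine ⟨2 ^ n, one_le_pow₀ (by norm_num), fun t ht => ?_⟩
  have h0 : 0 < t := by linarith
  refine (key n t ht).trans (mul_le_mul_of_nonneg_left ?_ (by positivity))
  exact hw_anti (mul_pos hM h0 : 0 < M * t) (by simp only [Set.mem_Ioi]; positivity)
    (mul_le_mul_of_nonneg_right hn.le h0.le)

/-! ### A number with prescribed rational approximations -/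

/-- A solution of the linear equation `b * q - p * b' = 1` with `b'` in a prescribed window. -/
lemma exists_next {p q : ℤ} (hq : 0 < q) (h : IsCoprime p q) (G : ℝ) :
    ∃ p' q' : ℤ, p' * q - p * q' = 1 ∧ G ≤ q' ∧ (q' : ℝ) ≤ G + q := by
  obtain ⟨a, b, hab⟩ := h
  have hq' : (0 : ℝ) < q := by exact_mod_cast hq
  refine ⟨b + ⌈(G + a) / q⌉ * p, -a + ⌈(G + a) / q⌉ * q, by linear_combination hab, ?_, ?_⟩
  · have := Int.le_ceil ((G + a) / q)
    rw [div_le_iff₀ hq'] at this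
    push_cast; linarith
  · have := (Int.ceil_lt_add_one ((G + a) / q)).le
    have h2 := mul_le_mul_of_nonneg_right this hq'.le
    rw [add_mul, div_mul_cancel₀ _ hq'.ne'] at h2
    push_cast; linarith

/-- Sequences of numerators and denominators with consecutive determinants `1` and denominators
growing at the rate prescribed by `H`. -/
lemma exists_convergents (H : ℤ → ℝ) (hH : ∀ q : ℤ, 1 ≤ q → 4 * (q : ℝ) ≤ H q) :
    ∃ p q : ℕ → ℤ, p 0 = 1 ∧ q 0 = 1 ∧ (∀ k, 0 < p k) ∧ (∀ k, 0 < q k) ∧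
      (∀ k, IsCoprime (p k) (q k)) ∧ (∀ k, p (k + 1) * q k - p k * q (k + 1) = 1) ∧
      (∀ k, H (q k) ≤ q (k + 1)) ∧ (∀ k, (q (k + 1) : ℝ) ≤ 2 * H (q k)) := by
  let S := {x : ℤ × ℤ // 0 < x.1 ∧ 0 < x.2 ∧ IsCoprime x.1 x.2}
  have step : ∀ x : S, ∃ y : S, y.1.1 * x.1.2 - x.1.1 * y.1.2 = 1 ∧ H x.1.2 ≤ y.1.2 ∧
      (y.1.2 : ℝ) ≤ 2 * H x.1.2 := by
    rintro ⟨⟨p, q⟩, hp, hq, hc⟩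
    simp only at hp hq hc
    obtain ⟨p', q', h1, h2, h3⟩ := exists_next hq hc (H q)
    have hq1 : (1 : ℝ) ≤ q := by exact_mod_cast hq
    have h4 := hH q hq
    have hq'0 : (0 : ℝ) < q' := by linarith
    have hq' : 0 < q' := by exact_mod_cast hq'0
    have hp' : 0 < p' := by
      have : 0 < p' * q := by nlinarith [mul_pos hp hq']
      exact pos_of_mul_pos_left this hq.le
    refine ⟨⟨(p', q'), hp', hq', ⟨q, -p, by linear_combination h1⟩⟩, h1, h2, ?_⟩
    simp only; linarith
  choose f hf1 hf2 hf3 using step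
  let s : ℕ → S := fun k => Nat.rec ⟨(1, 1), one_pos, one_pos, isCoprime_one_left⟩ (fun _ x => f x) k
  exact ⟨fun k => (s k).1.1, fun k => (s k).1.2, rfl, rfl, fun k => (s k).2.1, fun k => (s k).2.2.1,
    fun k => (s k).2.2.2, fun k => hf1 (s k), fun k => hf2 (s k), fun k => hf3 (s k)⟩

/-- For any admissible growth function `H` there is a real number `α` whose good rational
approximations are exactly a sequence `p k / q k` with `q k * α - p k` comparable to
`1 / H (q k)`; every integer pair that is not proportional to some `(p k, q k)` behaves as for a
badly approximable number. -/
lemma exists_alpha (H : ℤ → ℝ) (hH : ∀ q : ℤ, 1 ≤ q → 4 * (q : ℝ) ≤ H q) :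
    ∃ (α : ℝ) (p q : ℕ → ℤ), |α| ≤ 3 ∧ (∀ k, 0 < p k) ∧ (∀ k, 0 < q k) ∧
      (∀ k, IsCoprime (p k) (q k)) ∧ StrictMono q ∧ (∀ k, (p k : ℝ) ≤ 3 * q k) ∧
      (∀ k, 1 / (2 * H (q k)) ≤ q k * α - p k) ∧ (∀ k, q k * α - p k ≤ 2 / H (q k)) ∧
      ∀ (a b : ℤ) (Y : ℝ), 1 ≤ Y → |(b : ℝ)| ≤ Y → (∀ k, a * q k ≠ b * p k) →
        1 / (8 * Y) ≤ |α * b - a| := by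
  obtain ⟨p, q, hp0, hq0, hp, hq, hc, hdet, hlo, hhi⟩ := exists_convergents H hH
  have hqR : ∀ k, (0 : ℝ) < q k := fun k => by exact_mod_cast hq k
  have h4 : ∀ k, 4 * (q k : ℝ) ≤ q (k + 1) := fun k => (hH _ (hq k)).trans (hlo k)
  have hHpos : ∀ k, 0 < H (q k) := fun k => by
    have := hH _ (hq k); have := hqR k; linarith
  have hdetR : ∀ k, (p (k + 1) : ℝ) * q k - p k * q (k + 1) = 1 := fun k => by
    exact_mod_cast hdet k
  have hr : ∀ k, (p (k + 1) : ℝ) / q (k + 1) = p k / q k + 1 / (q k * q (k + 1)) := by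
    intro k
    have h1 := hqR k; have h2 := hqR (k + 1)
    field_simp
    linarith [hdetR k]
  have hmono : Monotone fun k => (p k : ℝ) / q k := by
    refine monotone_nat_of_le_succ fun k => ?_
    rw [hr k]
    have h1 := hqR k; have h2 := hqR (k + 1)
    have : 0 < 1 / ((q k : ℝ) * q (k + 1)) := by positivity
    linarith
  have hanti : Antitone fun k => (p k : ℝ) / q k + 2 / (q k * q (k + 1)) := by
    refine antitone_nat_of_succ_le fun k => ?_
    rw [hr k]
    have h1 := hqR k; have h2 := hqR (k + 1); have h3 := hqR (k + 1 + 1)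
    have h5 := h4 (k + 1); have h6 := h4 k
    have : 2 / ((q (k + 1) : ℝ) * q (k + 1 + 1)) ≤ 1 / (q k * q (k + 1)) := by
      rw [div_le_div_iff₀ (by positivity) (by positivity)]
      nlinarith
    have h7 : 2 / ((q k : ℝ) * q (k + 1)) = 1 / (q k * q (k + 1)) + 1 / (q k * q (k + 1)) := by
      ring
    linarith
  have hmem := hmono.ciSup_mem_iInter_Icc_of_antitone hanti (fun k => by
    have h1 := hqR k; have h2 := hqR (k + 1)
    have : 0 < 2 / ((q k : ℝ) * q (k + 1)) := by positivity
    linarith)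
  set α : ℝ := ⨆ k, (p k : ℝ) / q k with hα
  have hmem' : ∀ k, (p k : ℝ) / q k ≤ α ∧ α ≤ (p k : ℝ) / q k + 2 / (q k * q (k + 1)) := fun k =>
    Set.mem_iInter.1 hmem k
  have hub : ∀ k, q k * α - p k ≤ 2 / q (k + 1) := by
    intro k
    have h1 := hqR k; have h2 := hqR (k + 1)
    have h3 := mul_le_mul_of_nonneg_left (hmem' k).2 h1.le
    have h4 : (q k : ℝ) * ((p k : ℝ) / q k + 2 / (q k * q (k + 1))) = p k + 2 / q (k + 1) := by
      field_simp
    linarith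
  have hlb : ∀ k, 1 / (q (k + 1) : ℝ) ≤ q k * α - p k := by
    intro k
    have h1 := hqR k; have h2 := hqR (k + 1)
    have h3 := mul_le_mul_of_nonneg_left (hmem' (k + 1)).1 h1.le
    rw [hr k] at h3
    have h4 : (q k : ℝ) * ((p k : ℝ) / q k + 1 / (q k * q (k + 1))) = p k + 1 / q (k + 1) := by
      field_simp
    linarith
  have hα1 : 1 ≤ α := by
    have := (hmem' 0).1; simpa [hp0, hq0] using this
  have hα3 : α ≤ 3 := by
    have h1 := (hmem' 0).2
    have h2 := h4 0
    simp only [hp0, hq0, zero_add, Int.cast_one, div_one, one_mul, mul_one] at h1 h2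
    have : 2 / (q 1 : ℝ) ≤ 2 := by
      rw [div_le_iff₀ (by linarith)]; linarith
    linarith
  have hsm : StrictMono q := by
    refine strictMono_nat_of_lt_succ fun k => ?_
    have h1 := h4 k; have h2 := hqR k
    have : (q k : ℝ) < q (k + 1) := by linarith
    exact_mod_cast this
  refine ⟨α, p, q, abs_le.2 ⟨by linarith, hα3⟩, hp, hq, hc, hsm, ?_, ?_, ?_, ?_⟩
  · intro k
    have h1 := (hmem' k).1
    rw [div_le_iff₀ (hqR k)] at h1
    have := mul_le_mul_of_nonneg_right hα3 (hqR k).le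
    linarith
  · intro k
    refine le_trans ?_ (hlb k)
    exact one_div_le_one_div_of_le (hqR (k + 1)) (hhi k)
  · intro k
    refine (hub k).trans ?_
    exact div_le_div_of_nonneg_left (by norm_num) (hHpos k) (hlo k)
  · intro a b Y hY hb hne
    have hex : ∃ k, 4 * Y < q k := by
      obtain ⟨n, hn⟩ := exists_nat_gt (4 * Y)
      refine ⟨n, hn.trans_le ?_⟩
      have h1 : ∀ n : ℕ, (n : ℤ) ≤ q n := by
        intro n
        induction n with
        | zero => simp [hq0]
        | succ n ih =>
          have := hsm (Nat.lt_add_one n)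
          push_cast; omega
      exact_mod_cast h1 n
    classical
    obtain ⟨k, hk1, hk2⟩ : ∃ k, (q k : ℝ) ≤ 4 * Y ∧ 4 * Y < q (k + 1) := by
      rcases hm : Nat.find hex with _ | k
      · have := Nat.find_spec hex
        rw [hm, hq0] at this
        push_cast at this
        linarith
      · refine ⟨k, not_lt.1 (Nat.find_min hex (by omega)), ?_⟩
        have := Nat.find_spec hex
        rwa [hm] at this
    have h1 := hqR k; have h2 := hqR (k + 1)
    have hint : (1 : ℝ) ≤ |(a : ℝ) * q k - b * p k| := by
      have : 1 ≤ |a * q k - b * p k| := Int.one_le_abs (sub_ne_zero.2 (hne k))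
      exact_mod_cast this
    have hpos : 0 ≤ q k * α - p k := le_trans (by positivity) (hlb k)
    have hsmall : |(b : ℝ) * (q k * α - p k)| ≤ 1 / 2 := by
      rw [abs_mul, abs_of_nonneg hpos]
      calc |(b : ℝ)| * (q k * α - p k) ≤ Y * (2 / q (k + 1)) := by
            gcongr; exact hub k
        _ ≤ 1 / 2 := by
            rw [← mul_div_assoc, div_le_div_iff₀ h2 (by norm_num)]; linarith
    have hkey : (q k : ℝ) * |α * b - a| = |(b : ℝ) * (q k * α - p k) - (a * q k - b * p k)| := by
      rw [← abs_of_pos h1, ← abs_mul, abs_of_pos h1]; congr 1; ring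
    have h5 : 1 / 2 ≤ (q k : ℝ) * |α * b - a| := by
      rw [hkey]
      have := abs_sub_abs_le_abs_sub ((a : ℝ) * q k - b * p k) (b * (q k * α - p k))
      rw [abs_sub_comm ((a : ℝ) * q k - b * p k) (b * (q k * α - p k))] at this
      linarith
    rw [div_le_iff₀ (by positivity)]
    nlinarith [abs_nonneg (α * b - a)]

/-! ### One-dimensional estimates for negative powers -/

/-- The uniform probability measure on `[1, 2]`. -/
def unif : Measure ℝ := volume.restrict (Set.Icc 1 2)

instance : IsProbabilityMeasure unif := ⟨by
  rw [unif, Measure.restrict_apply MeasurableSet.univ, Set.univ_inter, Real.volume_Icc]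
  norm_num⟩

/-- The function `|x| ^ (-s)` with values in `[0, ∞]`, so that its value at `0` is `∞` for
`s > 0`. -/
def negPow (s x : ℝ) : ENNReal := ENNReal.ofReal |x| ^ (-s)

lemma measurable_negPow (s : ℝ) : Measurable (negPow s) := by
  unfold negPow; fun_prop

lemma negPow_mul (s x y : ℝ) : negPow s (x * y) = negPow s x * negPow s y := by
  unfold negPow
  rw [abs_mul, ENNReal.ofReal_mul (abs_nonneg x)]
  exact ENNReal.mul_rpow_of_ne_top ENNReal.ofReal_ne_top ENNReal.ofReal_ne_top _

lemma negPow_of_ne (s : ℝ) {x : ℝ} (hx : x ≠ 0) : negPow s x = ENNReal.ofReal (|x| ^ (-s)) := by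
  unfold negPow
  rw [ENNReal.ofReal_rpow_of_pos (abs_pos.2 hx)]

lemma negPow_neg (s x : ℝ) : negPow s (-x) = negPow s x := by simp [negPow]

lemma negPow_le {s : ℝ} (hs : 0 ≤ s) {a x : ℝ} (ha : 0 < a) (h : a ≤ |x|) :
    negPow s x ≤ ENNReal.ofReal (a ^ (-s)) := by
  have hx : x ≠ 0 := by
    rintro rfl
    simp at h; linarith
  rw [negPow_of_ne s hx]
  exact ENNReal.ofReal_le_ofReal (Real.rpow_le_rpow_of_nonpos ha h (by linarith))

lemma lintegral_negPow_Ioc {s : ℝ} (hs1 : s < 1) :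
    ∫⁻ u in Set.Ioc (0 : ℝ) 1, negPow s u = ENNReal.ofReal (1 / (1 - s)) := by
  have h1 : ∫⁻ u in Set.Ioc (0 : ℝ) 1, negPow s u
      = ∫⁻ u in Set.Ioc (0 : ℝ) 1, ENNReal.ofReal (u ^ (-s)) := by
    refine setLIntegral_congr_fun measurableSet_Ioc fun u hu => ?_
    rw [negPow_of_ne s hu.1.ne', abs_of_pos hu.1]
  have hint : IntegrableOn (fun u : ℝ => u ^ (-s)) (Set.Ioc 0 1) := by
    rw [← intervalIntegrable_iff_integrableOn_Ioc_of_le zero_le_one]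
    exact intervalIntegral.intervalIntegrable_rpow' (by linarith)
  rw [h1, ← ofReal_integral_eq_lintegral_ofReal hint]
  · rw [← intervalIntegral.integral_of_le zero_le_one, integral_rpow (Or.inl (by linarith))]
    congr 1
    rw [Real.zero_rpow (by linarith), Real.one_rpow]
    ring
  · filter_upwards [ae_restrict_mem measurableSet_Ioc] with u hu
    exact Real.rpow_nonneg hu.1.le _

lemma lintegral_negPow_Icc {s : ℝ} (hs1 : s < 1) :
    ∫⁻ u in Set.Icc (-1 : ℝ) 1, negPow s u ≤ 2 * ENNReal.ofReal (1 / (1 - s)) := by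
  have h1 : ∫⁻ u in Set.Ico (-1 : ℝ) 0, negPow s u = ∫⁻ u in Set.Ioc (0 : ℝ) 1, negPow s u := by
    have hpre := (Measure.measurePreserving_neg (volume : Measure ℝ)).setLIntegral_comp_preimage
      (measurableSet_Ioc (a := (0 : ℝ)) (b := 1)) (measurable_negPow s)
    rw [← hpre]
    simp [negPow_neg]
  have h2 : Set.Icc (-1 : ℝ) 1 ⊆ (Set.Ico (-1 : ℝ) 0 ∪ Set.Ioc 0 1) ∪ {0} := by
    intro x hx
    rcases lt_trichotomy x 0 with h | h | h
    · exact Or.inl (Or.inl ⟨hx.1, h⟩)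
    · exact Or.inr h
    · exact Or.inl (Or.inr ⟨h, hx.2⟩)
  calc ∫⁻ u in Set.Icc (-1 : ℝ) 1, negPow s u
      ≤ ∫⁻ u in (Set.Ico (-1 : ℝ) 0 ∪ Set.Ioc 0 1) ∪ {0}, negPow s u := lintegral_mono_set h2
    _ ≤ ((∫⁻ u in Set.Ico (-1 : ℝ) 0, negPow s u) + ∫⁻ u in Set.Ioc (0 : ℝ) 1, negPow s u)
        + ∫⁻ u in {(0 : ℝ)}, negPow s u :=
      (lintegral_union_le _ _ _).trans (add_le_add (lintegral_union_le (negPow s) _ _) le_rfl)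
    _ = _ := by
      rw [h1, lintegral_negPow_Ioc hs1, setLIntegral_measure_zero _ _ (by simp), add_zero, two_mul]

/-- The mean of `|c + t m| ^ (-s)` for `t` uniform in `[1, 2]` is at most that of the singularity
at the origin, rescaled by `m`. -/
lemma lintegral_negPow_affine {s : ℝ} (hs : 0 ≤ s) (hs1 : s < 1) (c : ℝ) {m : ℝ} (hm : m ≠ 0) :
    ∫⁻ t, negPow s (c + t * m) ∂unif ≤ ENNReal.ofReal (3 / (1 - s) * |m| ^ (-s)) := by
  have h1 : ∀ t, negPow s (c + t * m) = negPow s m * negPow s (c / m + t) := by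
    intro t
    rw [← negPow_mul]; congr 1; field_simp
  have h2 : ∀ u, negPow s u ≤ 1 + (Set.Icc (-1 : ℝ) 1).indicator (negPow s) u := by
    intro u
    by_cases hu : u ∈ Set.Icc (-1 : ℝ) 1
    · rw [Set.indicator_of_mem hu]; exact le_add_self
    · rw [Set.indicator_of_notMem hu, add_zero]
      have : (1 : ℝ) ≤ |u| := by
        by_contra hcon
        push Not at hcon
        exact hu (abs_le.1 hcon.le)
      simpa using negPow_le hs one_pos this
  have h3 : ∫⁻ t, negPow s (c / m + t) ∂unif ≤ ENNReal.ofReal (3 / (1 - s)) := by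
    calc ∫⁻ t, negPow s (c / m + t) ∂unif
        ≤ ∫⁻ t, (1 + (Set.Icc (-1 : ℝ) 1).indicator (negPow s) (c / m + t)) ∂unif :=
          lintegral_mono fun t => h2 _
      _ = 1 + ∫⁻ t, (Set.Icc (-1 : ℝ) 1).indicator (negPow s) (c / m + t) ∂unif := by
          rw [lintegral_add_left measurable_const]; simp
      _ ≤ 1 + ∫⁻ t, (Set.Icc (-1 : ℝ) 1).indicator (negPow s) (c / m + t) := by
          gcongr
          exact Measure.restrict_le_self
      _ = 1 + ∫⁻ u in Set.Icc (-1 : ℝ) 1, negPow s u := by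
          rw [lintegral_add_left_eq_self (μ := (volume : Measure ℝ))
            (fun t => (Set.Icc (-1 : ℝ) 1).indicator (negPow s) t), lintegral_indicator
            measurableSet_Icc]
      _ ≤ 1 + 2 * ENNReal.ofReal (1 / (1 - s)) := by
          gcongr; exact lintegral_negPow_Icc hs1
      _ ≤ ENNReal.ofReal (3 / (1 - s)) := by
          have h4 : 1 ≤ 1 / (1 - s) := by
            rw [le_div_iff₀ (by linarith)]; linarith
          rw [show (1 : ENNReal) = ENNReal.ofReal 1 by simp,
            show (2 : ENNReal) = ENNReal.ofReal 2 by simp,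
            ← ENNReal.ofReal_mul (by norm_num), ← ENNReal.ofReal_add (by norm_num) (by linarith)]
          refine ENNReal.ofReal_le_ofReal ?_
          have : 3 / (1 - s) = 3 * (1 / (1 - s)) := by ring
          linarith
  calc ∫⁻ t, negPow s (c + t * m) ∂unif = negPow s m * ∫⁻ t, negPow s (c / m + t) ∂unif := by
        simp_rw [h1]
        rw [lintegral_const_mul]
        exact (measurable_negPow s).comp (measurable_const.add measurable_id)
    _ ≤ ENNReal.ofReal (|m| ^ (-s)) * ENNReal.ofReal (3 / (1 - s)) := by
        rw [negPow_of_ne s hm]; gcongr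
    _ = _ := by
        rw [← ENNReal.ofReal_mul (Real.rpow_nonneg (abs_nonneg _) _), mul_comm]

lemma card_near_le (F : Finset ℤ) (c : ℝ) {R : ℝ} (hR : 0 ≤ R) :
    ((F.filter fun y : ℤ => |c - (y : ℝ)| < R).card : ℝ) ≤ 2 * R + 1 := by
  have h1 : (F.filter fun y : ℤ => |c - (y : ℝ)| < R) ⊆ Finset.Icc ⌈c - R⌉ ⌊c + R⌋ := by
    intro y hy
    have := abs_lt.1 (Finset.mem_filter.1 hy).2
    rw [Finset.mem_Icc, Int.ceil_le, Int.le_floor]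
    constructor <;> linarith
  have h2 : ((F.filter fun y : ℤ => |c - (y : ℝ)| < R).card : ℝ) ≤ ((⌊c + R⌋ + 1 - ⌈c - R⌉).toNat : ℝ) := by
    rw [← Int.card_Icc]
    exact_mod_cast Finset.card_le_card h1
  refine h2.trans ?_
  have h3 := Int.floor_le (c + R)
  have h4 := Int.le_ceil (c - R)
  rcases le_total (⌊c + R⌋ + 1 - ⌈c - R⌉) 0 with h | h
  · rw [Int.toNat_of_nonpos h]; push_cast; linarith
  · have : (((⌊c + R⌋ + 1 - ⌈c - R⌉).toNat : ℤ) : ℝ) = ((⌊c + R⌋ + 1 - ⌈c - R⌉ : ℤ) : ℝ) := by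
      rw [Int.toNat_of_nonneg h]
    rw [Int.cast_natCast] at this
    rw [this]; push_cast; linarith

/-- Summing reciprocals of distances over distinct integers costs only a logarithm. -/
lemma sum_inv_dist_le (F : Finset ℤ) (n : ℤ) (N : ℕ) :
    ∑ y ∈ F.filter (fun y : ℤ => (y - n).natAbs ∈ Finset.Icc 1 N), (1 : ℝ) / (y - n).natAbs
      ≤ 2 * (1 + Real.log N) := by
  rw [← Finset.sum_fiberwise_of_maps_to (t := Finset.Icc 1 N) (g := fun y : ℤ => (y - n).natAbs)
    (fun y hy => (Finset.mem_filter.1 hy).2)]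
  have h1 : ∀ k ∈ Finset.Icc 1 N, ∑ y ∈ (F.filter (fun y : ℤ => (y - n).natAbs ∈ Finset.Icc 1 N)).filter
      (fun y : ℤ => (y - n).natAbs = k), (1 : ℝ) / (y - n).natAbs ≤ 2 * (k : ℝ)⁻¹ := by
    intro k hk
    have hsub : (F.filter (fun y : ℤ => (y - n).natAbs ∈ Finset.Icc 1 N)).filter
      (fun y : ℤ => (y - n).natAbs = k) ⊆ {n + k, n - k} := by
      intro y hy
      have := (Finset.mem_filter.1 hy).2
      simp only [Finset.mem_insert, Finset.mem_singleton]
      omega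
    have hcard := (Finset.card_le_card hsub).trans Finset.card_le_two
    rw [Finset.sum_congr rfl (g := fun _ => (k : ℝ)⁻¹) (fun y hy => by
      rw [(Finset.mem_filter.1 hy).2, one_div])]
    rw [Finset.sum_const, nsmul_eq_mul]
    gcongr
    exact_mod_cast hcard
  refine (Finset.sum_le_sum h1).trans ?_
  rw [← Finset.mul_sum]
  gcongr
  have := harmonic_le_one_add_log N
  rw [harmonic_eq_sum_Icc] at this
  push_cast at this
  exact this

lemma sum_rpow_dist_le {s : ℝ} (hs : 0 ≤ s) (hs1 : s < 1) (F : Finset ℤ) (c : ℝ) {N : ℕ}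
    (hN : 1 ≤ N) (hF : F.card ≤ N) :
    ∑ y ∈ F.filter (fun y : ℤ => ¬ |c - (y : ℝ)| < 1), |c - (y : ℝ)| ^ (-s)
      ≤ 2 * (N : ℝ) ^ (1 - s) * (3 + 2 * Real.log N) := by
  classical
  set n := ⌊c⌋
  set B := (N : ℝ) ^ (1 - s)
  have hN0 : (0 : ℝ) < N := by exact_mod_cast hN
  have hB : 0 < B := Real.rpow_pos_of_pos hN0 _
  have hterm : ∀ y ∈ F.filter (fun y : ℤ => ¬ |c - (y : ℝ)| < 1), |c - (y : ℝ)| ^ (-s)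
      ≤ 2 * B * ((if (y - n).natAbs ∈ Finset.Icc 1 N then (1 : ℝ) / (y - n).natAbs else 0)
        + 1 / N) := by
    intro y hy
    have hy1 := not_lt.1 (Finset.mem_filter.1 hy).2
    have hn1 : (n : ℝ) ≤ c := Int.floor_le c
    have hn2 : c < n + 1 := Int.lt_floor_add_one c
    have hyn : 1 ≤ (y - n).natAbs := by
      rw [Nat.one_le_iff_ne_zero, Ne, Int.natAbs_eq_zero, sub_eq_zero]
      intro h
      rw [h, abs_of_nonneg (by linarith)] at hy1
      linarith
    have hcast : (((y - n).natAbs : ℕ) : ℝ) = |(y : ℝ) - n| := by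
      rw [Nat.cast_natAbs]; push_cast; rfl
    set k := (y - n).natAbs
    have hk0 : (0 : ℝ) < k := by exact_mod_cast hyn
    have hk2 : (k : ℝ) / 2 ≤ |c - y| := by
      have h5 : |(y : ℝ) - n| ≤ |c - y| + |c - n| := by
        rw [abs_sub_comm c (y : ℝ)]; exact abs_sub_le _ _ _
      have h6 : |c - n| ≤ 1 := by rw [abs_of_nonneg] <;> linarith
      rw [hcast]; linarith
    have hk3 : |c - (y : ℝ)| ^ (-s) ≤ 2 * (k : ℝ) ^ (-s) := by
      refine (Real.rpow_le_rpow_of_nonpos (by positivity) hk2 (by linarith)).trans ?_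
      rw [Real.div_rpow hk0.le (by norm_num), Real.rpow_neg (by norm_num : (0 : ℝ) ≤ 2),
        div_inv_eq_mul, mul_comm]
      gcongr
      calc (2 : ℝ) ^ s ≤ 2 ^ (1 : ℝ) := Real.rpow_le_rpow_of_exponent_le (by norm_num) hs1.le
        _ = 2 := Real.rpow_one 2
    refine hk3.trans ?_
    rw [mul_assoc]
    gcongr
    by_cases hkN : k ≤ N
    · rw [if_pos (Finset.mem_Icc.2 ⟨hyn, hkN⟩)]
      have h7 : (k : ℝ) ^ (-s) = (k : ℝ) ^ (1 - s) * (1 / k) := by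
        rw [show -s = (1 - s) - 1 by ring, Real.rpow_sub_one hk0.ne']; ring
      rw [h7, mul_add]
      have h8 : (k : ℝ) ^ (1 - s) ≤ B := Real.rpow_le_rpow hk0.le (by exact_mod_cast hkN) (by linarith)
      have h9 : 0 ≤ B * (1 / N) := by positivity
      have h10 : (k : ℝ) ^ (1 - s) * (1 / k) ≤ B * (1 / k) := by gcongr
      linarith
    · rw [if_neg (fun h => hkN (Finset.mem_Icc.1 h).2), zero_add]
      push Not at hkN
      have h7 : B * (1 / N) = (N : ℝ) ^ (-s) := by
        rw [show -s = (1 - s) - 1 by ring, Real.rpow_sub_one hN0.ne']; simp only [B]; ring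
      rw [h7]
      exact Real.rpow_le_rpow_of_nonpos hN0 (by exact_mod_cast hkN.le) (by linarith)
  refine (Finset.sum_le_sum hterm).trans ?_
  rw [← Finset.mul_sum]
  gcongr
  rw [Finset.sum_add_distrib, ← Finset.sum_filter, Finset.sum_const, nsmul_eq_mul]
  have h1 := sum_inv_dist_le (F.filter (fun y : ℤ => ¬ |c - (y : ℝ)| < 1)) n N
  have h2 : ((F.filter (fun y : ℤ => ¬ |c - (y : ℝ)| < 1)).card : ℝ) * (1 / N) ≤ 1 := by
    rw [mul_one_div, div_le_one hN0]
    exact_mod_cast (Finset.card_filter_le _ _).trans hF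
  linarith

/-! ### Estimates at a dyadic scale -/

/-- The exponent used at scale `2 ^ ν`: it is so close to `1` that passing from `x ^ (-1)` to
`x ^ (-s)` costs only a constant for `x` of size `2 ^ ν`, while the integral of `x ^ (-s)` near
`0` is still only `ν + 1`. -/
def scaleExp (ν : ℕ) : ℝ := ν / (ν + 1)

lemma scaleExp_nonneg (ν : ℕ) : 0 ≤ scaleExp ν := by unfold scaleExp; positivity

lemma one_sub_scaleExp (ν : ℕ) : 1 - scaleExp ν = 1 / ((ν : ℝ) + 1) := by
  unfold scaleExp
  have : (0 : ℝ) < (ν : ℝ) + 1 := by positivity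
  field_simp
  ring

lemma scaleExp_lt_one (ν : ℕ) : scaleExp ν < 1 := by
  have h := one_sub_scaleExp ν
  have : (0 : ℝ) < 1 / ((ν : ℝ) + 1) := by positivity
  linarith

lemma const_div_one_sub_scaleExp (a : ℝ) (ν : ℕ) : a / (1 - scaleExp ν) = a * (ν + 1) := by
  rw [one_sub_scaleExp, div_div_eq_mul_div, div_one]

lemma scale_rpow_le (ν : ℕ) : ((2 : ℝ) ^ ν) ^ (1 - scaleExp ν) ≤ 2 := by
  have h0 : (0 : ℝ) < (ν : ℝ) + 1 := by positivity
  rw [← Real.rpow_natCast, ← Real.rpow_mul (by norm_num), one_sub_scaleExp]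
  calc (2 : ℝ) ^ ((ν : ℝ) * (1 / ((ν : ℝ) + 1))) ≤ 2 ^ (1 : ℝ) := by
        refine Real.rpow_le_rpow_of_exponent_le (by norm_num) ?_
        rw [mul_one_div, div_le_one h0]; linarith
    _ = 2 := Real.rpow_one 2

lemma mul_scale_rpow_le (ν : ℕ) {a : ℝ} (ha : 1 ≤ a) :
    (a * (2 : ℝ) ^ ν) ^ (1 - scaleExp ν) ≤ a * 2 := by
  rw [Real.mul_rpow (by linarith) (by positivity)]
  refine mul_le_mul ?_ (scale_rpow_le ν) (by positivity) (by linarith)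
  calc a ^ (1 - scaleExp ν) ≤ a ^ (1 : ℝ) :=
        Real.rpow_le_rpow_of_exponent_le ha (by linarith [scaleExp_nonneg ν])
    _ = a := Real.rpow_one a

lemma sum_far_le (ν : ℕ) (F : Finset ℤ) (hF : F.card ≤ 5 * 2 ^ ν) (c : ℝ) :
    ∑ y ∈ F.filter (fun y : ℤ => ¬ |c - (y : ℝ)| < 1), |c - (y : ℝ)| ^ (-scaleExp ν)
      ≤ 140 * (ν + 1) := by
  have hN : 1 ≤ 5 * 2 ^ ν := by have := Nat.one_le_two_pow (n := ν); omega
  refine (sum_rpow_dist_le (scaleExp_nonneg ν) (scaleExp_lt_one ν) F c hN hF).trans ?_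
  have h1 : (((5 * 2 ^ ν : ℕ) : ℝ)) ^ (1 - scaleExp ν) ≤ 10 := by
    push_cast
    have := mul_scale_rpow_le ν (a := 5) (by norm_num)
    linarith
  have h2 : Real.log ((5 * 2 ^ ν : ℕ) : ℝ) ≤ 2 + ν := by
    push_cast
    rw [Real.log_mul (by norm_num) (by positivity), Real.log_pow]
    have h3 : Real.log 5 ≤ 2 := by
      rw [Real.log_le_iff_le_exp (by norm_num)]
      have h1 := Real.exp_one_gt_d9
      have : Real.exp 2 = Real.exp 1 * Real.exp 1 := by rw [← Real.exp_add]; norm_num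
      nlinarith
    have h4 : (ν : ℝ) * Real.log 2 ≤ ν * 1 := by
      gcongr
      linarith [Real.log_two_lt_d9]
    linarith
  have h3 : 0 ≤ Real.log ((5 * 2 ^ ν : ℕ) : ℝ) := Real.log_nonneg (by exact_mod_cast hN)
  have hν : (0 : ℝ) ≤ ν := Nat.cast_nonneg _
  calc 2 * (((5 * 2 ^ ν : ℕ) : ℝ)) ^ (1 - scaleExp ν) * (3 + 2 * Real.log ((5 * 2 ^ ν : ℕ) : ℝ))
      ≤ 2 * 10 * (3 + 2 * (2 + ν)) := by gcongr
    _ ≤ 140 * (ν + 1) := by nlinarith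

/-- Sum over the shifts `y`, averaged over `t`. Shifts far from `c` on the scale of `m` are
compared with a harmonic sum; each of the `O(|m|)` remaining shifts is controlled by the
averaging. -/
lemma lintegral_sum_shift_le (ν : ℕ) (F : Finset ℤ) (hF : F.card ≤ 5 * 2 ^ ν) (c : ℝ) {m : ℤ}
    (hm : m ≠ 0) (hm2 : |(m : ℝ)| ≤ 2 * 2 ^ ν) :
    ∫⁻ t, ∑ y ∈ F, negPow (scaleExp ν) (c - y + t * m) ∂unif ≤ ENNReal.ofReal (388 * (ν + 1)) := by
  set s := scaleExp ν
  have hs := scaleExp_nonneg ν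
  have hs1 := scaleExp_lt_one ν
  have hmR : (m : ℝ) ≠ 0 := by exact_mod_cast hm
  have hm1 : (1 : ℝ) ≤ |(m : ℝ)| := by exact_mod_cast Int.one_le_abs hm
  have hmpos : (0 : ℝ) < |(m : ℝ)| := by linarith
  have hν : (0 : ℝ) ≤ ν := Nat.cast_nonneg _
  have hmeas : ∀ y ∈ F, Measurable fun t : ℝ => negPow s (c - (y : ℝ) + t * m) :=
    fun y _ => (measurable_negPow s).comp (by fun_prop)
  rw [lintegral_finsetSum _ hmeas,
    ← Finset.sum_filter_add_sum_filter_not F (fun y : ℤ => |c - (y : ℝ)| < 4 * |(m : ℝ)|)]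
  have hnear : ∑ y ∈ F.filter (fun y : ℤ => |c - (y : ℝ)| < 4 * |(m : ℝ)|),
      ∫⁻ t, negPow s (c - y + t * m) ∂unif ≤ ENNReal.ofReal (108 * (ν + 1)) := by
    refine (Finset.sum_le_card_nsmul _ _ (ENNReal.ofReal (3 / (1 - s) * |(m : ℝ)| ^ (-s)))
      fun y _ => lintegral_negPow_affine hs hs1 _ hmR).trans ?_
    rw [← ENNReal.ofReal_nsmul, nsmul_eq_mul]
    refine ENNReal.ofReal_le_ofReal ?_
    have hc := card_near_le F c (R := 4 * |(m : ℝ)|) (by positivity)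
    have hc' : ((F.filter (fun y : ℤ => |c - (y : ℝ)| < 4 * |(m : ℝ)|)).card : ℝ)
      ≤ 9 * |(m : ℝ)| := by linarith
    rw [const_div_one_sub_scaleExp]
    have h1 : |(m : ℝ)| * |(m : ℝ)| ^ (-s) ≤ 4 := by
      have : |(m : ℝ)| * |(m : ℝ)| ^ (-s) = |(m : ℝ)| ^ (1 - s) := by
        rw [sub_eq_add_neg, Real.rpow_add hmpos, Real.rpow_one]
      rw [this]
      calc |(m : ℝ)| ^ (1 - s) ≤ (2 * 2 ^ ν) ^ (1 - s) :=
            Real.rpow_le_rpow hmpos.le hm2 (by linarith)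
        _ ≤ 2 * 2 := mul_scale_rpow_le ν (by norm_num)
        _ = 4 := by norm_num
    have h2 : 0 ≤ |(m : ℝ)| ^ (-s) := by positivity
    calc _ ≤ (9 * |(m : ℝ)|) * (3 * (ν + 1) * |(m : ℝ)| ^ (-s)) := by gcongr
      _ = 27 * (ν + 1) * (|(m : ℝ)| * |(m : ℝ)| ^ (-s)) := by ring
      _ ≤ 27 * (ν + 1) * 4 := by gcongr
      _ = 108 * (ν + 1) := by ring
  have hfar : ∑ y ∈ F.filter (fun y : ℤ => ¬ |c - (y : ℝ)| < 4 * |(m : ℝ)|),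
      ∫⁻ t, negPow s (c - y + t * m) ∂unif ≤ ENNReal.ofReal (280 * (ν + 1)) := by
    have h1 : ∀ y ∈ F.filter (fun y : ℤ => ¬ |c - (y : ℝ)| < 4 * |(m : ℝ)|),
        ∫⁻ t, negPow s (c - y + t * m) ∂unif ≤ ENNReal.ofReal (2 * |c - (y : ℝ)| ^ (-s)) := by
      intro y hy
      have hy1 := not_lt.1 (Finset.mem_filter.1 hy).2
      have hpos : 0 < |c - (y : ℝ)| := by linarith
      have h3 : (|c - (y : ℝ)| / 2) ^ (-s) ≤ 2 * |c - (y : ℝ)| ^ (-s) := by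
        rw [Real.div_rpow hpos.le (by norm_num), Real.rpow_neg (by norm_num : (0 : ℝ) ≤ 2),
          div_inv_eq_mul, mul_comm]
        gcongr
        calc (2 : ℝ) ^ s ≤ 2 ^ (1 : ℝ) := Real.rpow_le_rpow_of_exponent_le (by norm_num) hs1.le
          _ = 2 := Real.rpow_one 2
      calc ∫⁻ t, negPow s (c - y + t * m) ∂unif
          ≤ ∫⁻ t, ENNReal.ofReal (2 * |c - (y : ℝ)| ^ (-s)) ∂unif := by
            refine lintegral_mono_ae ?_
            filter_upwards [ae_restrict_mem measurableSet_Icc] with t ht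
            refine (negPow_le hs (a := |c - (y : ℝ)| / 2) (by positivity) ?_).trans
              (ENNReal.ofReal_le_ofReal h3)
            have h4 : |t * (m : ℝ)| ≤ 2 * |(m : ℝ)| := by
              rw [abs_mul, abs_of_nonneg (by linarith [ht.1])]
              gcongr; exact ht.2
            have h5 := abs_sub_abs_le_abs_sub (c - (y : ℝ)) (-(t * m))
            rw [abs_neg, sub_neg_eq_add] at h5
            linarith
        _ = _ := by simp
    refine (Finset.sum_le_sum h1).trans ?_
    rw [← ENNReal.ofReal_sum_of_nonneg (fun y _ => by positivity)]
    refine ENNReal.ofReal_le_ofReal ?_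
    rw [← Finset.mul_sum]
    have h2 : ∑ y ∈ F.filter (fun y : ℤ => ¬ |c - (y : ℝ)| < 4 * |(m : ℝ)|), |c - (y : ℝ)| ^ (-s)
        ≤ ∑ y ∈ F.filter (fun y : ℤ => ¬ |c - (y : ℝ)| < 1), |c - (y : ℝ)| ^ (-s) := by
      refine Finset.sum_le_sum_of_subset_of_nonneg ?_ fun y _ _ => by positivity
      refine Finset.monotone_filter_right F fun y _ hy => ?_
      simp only [not_lt] at hy ⊢
      linarith
    have h3 := sum_far_le ν F hF c
    linarith
  calc _ ≤ ENNReal.ofReal (108 * (ν + 1)) + ENNReal.ofReal (280 * (ν + 1)) := add_le_add hnear hfar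
    _ = _ := by
      rw [← ENNReal.ofReal_add (by positivity) (by positivity)]; congr 1; ring

/-- The deterministic analogue of `lintegral_sum_shift_le`, for a number that is not too close
to the integers occurring in the sum. -/
lemma sum_shift_le (ν : ℕ) (F : Finset ℤ) (hF : F.card ≤ 5 * 2 ^ ν) (x : ℝ) :
    ∑ y ∈ F.filter (fun y : ℤ => 1 / (16 * 2 ^ ν) ≤ |x - (y : ℝ)|), negPow (scaleExp ν) (x - y)
      ≤ ENNReal.ofReal (188 * 2 ^ ν * (ν + 1)) := by
  set s := scaleExp ν
  have hs := scaleExp_nonneg ν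
  have hs1 := scaleExp_lt_one ν
  have hν : (0 : ℝ) ≤ ν := Nat.cast_nonneg _
  have hT : (1 : ℝ) ≤ 2 ^ ν := one_le_pow₀ (by norm_num)
  rw [← Finset.sum_filter_add_sum_filter_not _ (fun y : ℤ => |x - (y : ℝ)| < 1)]
  have hnear : ∑ y ∈ (F.filter (fun y : ℤ => 1 / (16 * 2 ^ ν) ≤ |x - (y : ℝ)|)).filter
      (fun y : ℤ => |x - (y : ℝ)| < 1), negPow s (x - y) ≤ ENNReal.ofReal (48 * 2 ^ ν) := by
    refine (Finset.sum_le_card_nsmul _ _ (ENNReal.ofReal (16 * 2 ^ ν)) fun y hy => ?_).trans ?_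
    · have h1 := (Finset.mem_filter.1 (Finset.mem_filter.1 hy).1).2
      refine (negPow_le hs (by positivity) h1).trans (ENNReal.ofReal_le_ofReal ?_)
      rw [one_div, Real.inv_rpow (by positivity), Real.rpow_neg (by positivity), inv_inv]
      calc (16 * 2 ^ ν : ℝ) ^ s ≤ (16 * 2 ^ ν : ℝ) ^ (1 : ℝ) :=
            Real.rpow_le_rpow_of_exponent_le (by linarith) hs1.le
        _ = _ := Real.rpow_one _
    · rw [← ENNReal.ofReal_nsmul, nsmul_eq_mul]
      refine ENNReal.ofReal_le_ofReal ?_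
      have := card_near_le (F.filter (fun y : ℤ => 1 / (16 * 2 ^ ν) ≤ |x - (y : ℝ)|)) x zero_le_one
      nlinarith
  have hfar : ∑ y ∈ (F.filter (fun y : ℤ => 1 / (16 * 2 ^ ν) ≤ |x - (y : ℝ)|)).filter
      (fun y : ℤ => ¬ |x - (y : ℝ)| < 1), negPow s (x - y) ≤ ENNReal.ofReal (140 * (ν + 1)) := by
    have h1 : ∀ y ∈ (F.filter (fun y : ℤ => 1 / (16 * 2 ^ ν) ≤ |x - (y : ℝ)|)).filter
      (fun y : ℤ => ¬ |x - (y : ℝ)| < 1), negPow s (x - y) ≤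
        ENNReal.ofReal (|x - (y : ℝ)| ^ (-s)) := by
      intro y hy
      have h2 := not_lt.1 (Finset.mem_filter.1 hy).2
      exact negPow_le hs (by linarith) le_rfl
    refine (Finset.sum_le_sum h1).trans ?_
    rw [← ENNReal.ofReal_sum_of_nonneg (fun y _ => by positivity)]
    exact ENNReal.ofReal_le_ofReal
      (sum_far_le ν _ ((Finset.card_filter_le _ _).trans hF) x)
  calc _ ≤ ENNReal.ofReal (48 * 2 ^ ν) + ENNReal.ofReal (140 * (ν + 1)) := add_le_add hnear hfar
    _ ≤ _ := by
      rw [← ENNReal.ofReal_add (by positivity) (by positivity)]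
      refine ENNReal.ofReal_le_ofReal ?_
      nlinarith [mul_nonneg (sub_nonneg.2 hT) hν]

/-! ### The random matrix -/

/-- The entries of the `i`-th row of the random matrix, up to a multiple of the identity matrix.
They are the independent random variables `u j`, except that row `2` starts with `-1, α`. -/
def residEntry {n : ℕ} (α : ℝ) (i : Fin (n + 3)) (u : Fin (n + 3) → ℝ) (j : Fin (n + 3)) : ℝ :=
  if i = 2 ∧ j = 0 then -1 else if i = 2 ∧ j = 1 then α else u j

/-- The `i`-th coordinate of the image of `y` under the random matrix. The multiple of the
identity is so large that the matrix does not decrease the sup-norm. -/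
def rowVal {n : ℕ} (α : ℝ) (i : Fin (n + 3)) (u y : Fin (n + 3) → ℝ) : ℝ :=
  (3 * ((n : ℝ) + 3) + 1) * y i + ∑ j, residEntry α i u j * y j

/-- The law of the random coefficients. -/
def coeffLaw (n : ℕ) : Measure (Fin (n + 3) → Fin (n + 3) → ℝ) :=
  Measure.pi fun _ => Measure.pi fun _ => unif

instance (n : ℕ) : IsProbabilityMeasure (coeffLaw n) := by unfold coeffLaw; infer_instance

lemma measurable_rowVal {n : ℕ} (α : ℝ) (i : Fin (n + 3)) (y : Fin (n + 3) → ℝ) :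
    Measurable fun u => rowVal α i u y := by
  unfold rowVal residEntry
  refine Measurable.const_add (Finset.measurable_fun_sum _ fun j _ => ?_) _
  refine Measurable.mul_const ?_ _
  split_ifs <;> fun_prop

lemma exists_norm_eq_abs {n : ℕ} (y : Fin (n + 3) → ℝ) : ∃ j, ‖y‖ = |y j| := by
  obtain ⟨j, hj⟩ := Finite.exists_max fun j => |y j|
  exact ⟨j, le_antisymm ((pi_norm_le_iff_of_nonneg (abs_nonneg _)).2 fun i => hj i)
    (norm_le_pi_norm y j)⟩

lemma abs_sum_resid_le {n : ℕ} {α : ℝ} (hα : |α| ≤ 3) (i : Fin (n + 3)) {u : Fin (n + 3) → ℝ}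
    (hu : ∀ j, u j ∈ Set.Icc (1 : ℝ) 2) (y : Fin (n + 3) → ℝ) :
    |∑ j, residEntry α i u j * y j| ≤ 3 * ((n : ℝ) + 3) * ‖y‖ := by
  calc |∑ j, residEntry α i u j * y j| ≤ ∑ j, |residEntry α i u j * y j| :=
        Finset.abs_sum_le_sum_abs _ _
    _ ≤ ∑ _j : Fin (n + 3), 3 * ‖y‖ := by
        refine Finset.sum_le_sum fun j _ => ?_
        rw [abs_mul]
        refine mul_le_mul ?_ (norm_le_pi_norm y j) (abs_nonneg _) (by norm_num)
        unfold residEntry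
        have := hu j
        split_ifs
        · norm_num
        · exact hα
        · rw [abs_of_nonneg (by linarith [this.1])]; linarith [this.2]
    _ = _ := by simp; ring

lemma le_abs_rowVal {n : ℕ} {α : ℝ} (hα : |α| ≤ 3) {i : Fin (n + 3)} {u : Fin (n + 3) → ℝ}
    (hu : ∀ j, u j ∈ Set.Icc (1 : ℝ) 2) {y : Fin (n + 3) → ℝ} (hi : ‖y‖ = |y i|) :
    ‖y‖ ≤ |rowVal α i u y| := by
  have h := abs_sum_resid_le hα i hu y
  unfold rowVal
  have h1 := abs_sub_abs_le_abs_sub ((3 * ((n : ℝ) + 3) + 1) * y i)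
    (-∑ j, residEntry α i u j * y j)
  rw [abs_neg, sub_neg_eq_add, abs_mul, abs_of_nonneg (by positivity : 0 ≤ 3 * ((n : ℝ) + 3) + 1),
    ← hi] at h1
  linarith

lemma abs_rowVal_le {n : ℕ} {α : ℝ} (hα : |α| ≤ 3) (i : Fin (n + 3)) {u : Fin (n + 3) → ℝ}
    (hu : ∀ j, u j ∈ Set.Icc (1 : ℝ) 2) (y : Fin (n + 3) → ℝ) :
    |rowVal α i u y| ≤ (6 * (n + 3) + 1) * ‖y‖ := by
  have h := abs_sum_resid_le hα i hu y
  unfold rowVal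
  have h1 := abs_add_le ((3 * ((n : ℝ) + 3) + 1) * y i) (∑ j, residEntry α i u j * y j)
  rw [abs_mul, abs_of_nonneg (by positivity : 0 ≤ 3 * ((n : ℝ) + 3) + 1)] at h1
  have h2 : |y i| ≤ ‖y‖ := norm_le_pi_norm y i
  have h3 : (3 * ((n : ℝ) + 3) + 1) * |y i| ≤ (3 * ((n : ℝ) + 3) + 1) * ‖y‖ := by gcongr
  linarith

lemma norm_le_norm_rowVal {n : ℕ} {α : ℝ} (hα : |α| ≤ 3) {t : Fin (n + 3) → Fin (n + 3) → ℝ}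
    (ht : ∀ i j, t i j ∈ Set.Icc (1 : ℝ) 2) (y : Fin (n + 3) → ℝ) :
    ‖y‖ ≤ ‖fun i => rowVal α i (t i) y‖ := by
  obtain ⟨j, hj⟩ := exists_norm_eq_abs y
  exact (le_abs_rowVal hα (ht j) hj).trans (norm_le_pi_norm (fun i => rowVal α i (t i) y) j)

lemma norm_rowVal_le {n : ℕ} {α : ℝ} (hα : |α| ≤ 3) {t : Fin (n + 3) → Fin (n + 3) → ℝ}
    (ht : ∀ i j, t i j ∈ Set.Icc (1 : ℝ) 2) (y : Fin (n + 3) → ℝ) :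
    ‖fun i => rowVal α i (t i) y‖ ≤ (6 * (n + 3) + 1) * ‖y‖ :=
  (pi_norm_le_iff_of_nonneg (by positivity)).2 fun i => abs_rowVal_le hα i (ht i) y

/-- `rowVal` depends affinely on each coefficient that is not prescribed. -/
lemma rowVal_update {n : ℕ} (α : ℝ) {i k : Fin (n + 3)} (hik : ¬ (i = 2 ∧ (k = 0 ∨ k = 1)))
    (u y : Fin (n + 3) → ℝ) (t : ℝ) :
    rowVal α i (Function.update u k t) y = rowVal α i (Function.update u k 0) y + t * y k := by
  unfold rowVal
  rw [add_assoc, ← Finset.add_sum_erase _ _ (Finset.mem_univ k),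
    ← Finset.add_sum_erase _ (fun j => residEntry α i (Function.update u k 0) j * y j)
      (Finset.mem_univ k)]
  have h1 : ∀ c, residEntry α i (Function.update u k c) k = c := by
    intro c
    unfold residEntry
    rw [if_neg (by tauto), if_neg (by tauto), Function.update_self]
  have h2 : ∑ j ∈ Finset.univ.erase k, residEntry α i (Function.update u k t) j * y j
      = ∑ j ∈ Finset.univ.erase k, residEntry α i (Function.update u k 0) j * y j := by
    refine Finset.sum_congr rfl fun j hj => ?_
    unfold residEntry
    rw [Function.update_of_ne (Finset.ne_of_mem_erase hj),
      Function.update_of_ne (Finset.ne_of_mem_erase hj)]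
  rw [h1, h1, h2]
  ring

/-- A mean over all coefficients can be bounded by averaging over a single one of them. -/
lemma lintegral_pi_le_of_update {n : ℕ} {f : (Fin (n + 3) → ℝ) → ENNReal} (hf : Measurable f)
    (k : Fin (n + 3)) {B : ENNReal}
    (h : ∀ u, ∫⁻ t, f (Function.update u k t) ∂unif ≤ B) :
    ∫⁻ u, f u ∂(Measure.pi fun _ => unif) ≤ B := by
  have := lintegral_le_of_lmarginal_le (μ := fun _ : Fin (n + 3) => unif) {k} hf
    (measurable_const (a := B)) (by
      rw [lmarginal_singleton, lmarginal_singleton]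
      intro u
      simpa using h u)
  simpa using this

lemma lintegral_rowVal_le {n : ℕ} (α : ℝ) {i k : Fin (n + 3)}
    (hik : ¬ (i = 2 ∧ (k = 0 ∨ k = 1))) {s : ℝ} (hs : 0 ≤ s) (hs1 : s < 1)
    {y : Fin (n + 3) → ℝ} (hy : y k ≠ 0) :
    ∫⁻ u, negPow s (rowVal α i u y) ∂(Measure.pi fun _ => unif)
      ≤ ENNReal.ofReal (3 / (1 - s) * |y k| ^ (-s)) := by
  have hmeas : Measurable fun u => negPow s (rowVal α i u y) :=
    (measurable_negPow s).comp (measurable_rowVal α i y)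
  refine lintegral_pi_le_of_update hmeas k fun u => ?_
  have h : ∀ t, negPow s (rowVal α i (Function.update u k t) y)
      = negPow s (rowVal α i (Function.update u k 0) y + t * y k) :=
    fun t => by rw [rowVal_update α hik u y t]
  rw [lintegral_congr h]
  exact lintegral_negPow_affine hs hs1 _ hy

lemma lintegral_row_le {n : ℕ} (α : ℝ) {i : Fin (n + 3)} (hi : i ≠ 2) (ν : ℕ)
    {y : Fin (n + 3) → ℝ} (hy : 2 ^ ν ≤ ‖y‖) :
    ∫⁻ u, negPow (scaleExp ν) (rowVal α i u y) ∂(Measure.pi fun _ => unif)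
      ≤ ENNReal.ofReal (6 * (ν + 1) / 2 ^ ν) := by
  obtain ⟨k, hk⟩ := exists_norm_eq_abs y
  have hT : (0 : ℝ) < 2 ^ ν := by positivity
  have hyk : y k ≠ 0 := by
    intro h; rw [hk, h, abs_zero] at hy; linarith
  refine (lintegral_rowVal_le α (fun h => hi h.1) (scaleExp_nonneg ν) (scaleExp_lt_one ν)
    hyk).trans (ENNReal.ofReal_le_ofReal ?_)
  rw [const_div_one_sub_scaleExp, ← hk]
  have h1 : ‖y‖ ^ (-scaleExp ν) ≤ 2 / 2 ^ ν := by
    calc ‖y‖ ^ (-scaleExp ν) ≤ ((2 : ℝ) ^ ν) ^ (-scaleExp ν) :=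
          Real.rpow_le_rpow_of_nonpos hT hy (by linarith [scaleExp_nonneg ν])
      _ = ((2 : ℝ) ^ ν) ^ (1 - scaleExp ν) / 2 ^ ν := by
          rw [sub_eq_add_neg, Real.rpow_add hT, Real.rpow_one]; field_simp
      _ ≤ 2 / 2 ^ ν := by gcongr; exact scale_rpow_le ν
  calc 3 * ((ν : ℝ) + 1) * ‖y‖ ^ (-scaleExp ν) ≤ 3 * ((ν : ℝ) + 1) * (2 / 2 ^ ν) := by gcongr
    _ = _ := by ring

/-! ### Probability of a small product -/

lemma prod_erase_le {n : ℕ} (h : Fin (n + 3) → ENNReal) (c : ENNReal)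
    (hc : ∀ i, i ≠ 2 → h i ≤ c) (j : Fin (n + 3)) :
    ∏ i ∈ Finset.univ.erase j, h i ≤ c ^ (n + 1) * (h 2 + c) := by
  by_cases hj : j = 2
  · subst hj
    calc ∏ i ∈ Finset.univ.erase (2 : Fin (n + 3)), h i
        ≤ ∏ i ∈ Finset.univ.erase (2 : Fin (n + 3)), c :=
          Finset.prod_le_prod' fun i hi => hc i (Finset.ne_of_mem_erase hi)
      _ = c ^ (n + 1) * c := by
          rw [Finset.prod_const, Finset.card_erase_of_mem (Finset.mem_univ _), Finset.card_univ,
            Fintype.card_fin, ← pow_succ]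
          rfl
      _ ≤ _ := by gcongr; exact le_add_self
  · have h2 : (2 : Fin (n + 3)) ∈ Finset.univ.erase j :=
      Finset.mem_erase.2 ⟨fun h => hj h.symm, Finset.mem_univ _⟩
    rw [← Finset.mul_prod_erase _ _ h2, mul_comm]
    calc (∏ i ∈ (Finset.univ.erase j).erase 2, h i) * h 2
        ≤ (∏ i ∈ (Finset.univ.erase j).erase (2 : Fin (n + 3)), c) * h 2 := by
          gcongr with i hi
          exact hc i (Finset.ne_of_mem_erase hi)
      _ = c ^ (n + 1) * h 2 := by
          rw [Finset.prod_const, Finset.card_erase_of_mem h2,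
            Finset.card_erase_of_mem (Finset.mem_univ _), Finset.card_univ, Fintype.card_fin]
          rfl
      _ ≤ _ := by gcongr; exact le_self_add

lemma lintegral_prod_rows {n : ℕ} (α s : ℝ) (y : Fin (n + 3) → ℝ) (S : Finset (Fin (n + 3))) :
    ∫⁻ t, ∏ i ∈ S, negPow s (rowVal α i (t i) y) ∂(coeffLaw n)
      = ∏ i ∈ S, ∫⁻ u, negPow s (rowVal α i u y) ∂(Measure.pi fun _ => unif) := by
  have hmeas : ∀ i : Fin (n + 3), Measurable fun u => negPow s (rowVal α i u y) :=
    fun i => (measurable_negPow s).comp (measurable_rowVal α i y)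
  have hind : ProbabilityTheory.iIndepFun
      (fun (i : Fin (n + 3)) (t : Fin (n + 3) → Fin (n + 3) → ℝ) => negPow s (rowVal α i (t i) y))
      (coeffLaw n) :=
    ProbabilityTheory.iIndepFun_pi (X := fun i u => negPow s (rowVal α i u y))
      fun i => (hmeas i).aemeasurable
  rw [ProbabilityTheory.lintegral_prod_eq_prod_lintegral_of_indepFun S _ hind
    fun i => (hmeas i).comp (measurable_pi_apply i)]
  refine Finset.prod_congr rfl fun i _ => ?_
  exact (measurePreserving_eval (fun _ : Fin (n + 3) => Measure.pi fun _ : Fin (n + 3) => unif)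
    i).lintegral_comp (hmeas i)

lemma ae_mem_coeffLaw (n : ℕ) : ∀ᵐ t ∂(coeffLaw n), ∀ i j, t i j ∈ Set.Icc (1 : ℝ) 2 := by
  have h0 : ∀ᵐ x ∂unif, x ∈ Set.Icc (1 : ℝ) 2 := ae_restrict_mem measurableSet_Icc
  refine ae_all_iff.2 fun i => ae_all_iff.2 fun j => ?_
  have h1 : ∀ᵐ u ∂(Measure.pi fun _ : Fin (n + 3) => unif), u j ∈ Set.Icc (1 : ℝ) 2 :=
    (measurePreserving_eval (fun _ : Fin (n + 3) => unif) j).quasiMeasurePreserving.ae h0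
  exact (measurePreserving_eval (fun _ : Fin (n + 3) => Measure.pi fun _ : Fin (n + 3) => unif)
    i).quasiMeasurePreserving.ae h1

/-- Markov's inequality for the product of the negative powers of all coordinates but the one
that is known to be large. -/
lemma measure_prod_le {n : ℕ} {α : ℝ} (hα : |α| ≤ 3) (ν : ℕ) {y : Fin (n + 3) → ℝ}
    (hy : 2 ^ ν ≤ ‖y‖) {W : ℝ} (hW : 0 < W) :
    coeffLaw n {t | ∏ i, |rowVal α i (t i) y| ≤ W}
      ≤ ENNReal.ofReal ((W / 2 ^ ν) ^ scaleExp ν) *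
        (ENNReal.ofReal (6 * (ν + 1) / 2 ^ ν) ^ (n + 1) *
          ((∫⁻ u, negPow (scaleExp ν) (rowVal α (2 : Fin (n + 3)) u y)
            ∂(Measure.pi fun _ => unif)) + ENNReal.ofReal (6 * (ν + 1) / 2 ^ ν))) := by
  set s := scaleExp ν with hs_def
  have hs := scaleExp_nonneg ν
  obtain ⟨j, hj⟩ := exists_norm_eq_abs y
  have hT : (0 : ℝ) < 2 ^ ν := by positivity
  set f : (Fin (n + 3) → Fin (n + 3) → ℝ) → ENNReal :=
    fun t => ∏ i ∈ Finset.univ.erase j, negPow s (rowVal α i (t i) y) with hf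
  have hfm : Measurable f := by
    refine Finset.measurable_fun_prod _ fun i _ => ?_
    exact (measurable_negPow s).comp ((measurable_rowVal α i y).comp (measurable_pi_apply i))
  have hW0 : ENNReal.ofReal (W / 2 ^ ν) ≠ 0 := by
    rw [Ne, ENNReal.ofReal_eq_zero, not_le]; positivity
  have hsub : coeffLaw n {t | ∏ i, |rowVal α i (t i) y| ≤ W}
      ≤ coeffLaw n {t | ENNReal.ofReal (W / 2 ^ ν) ^ (-s) ≤ f t} := by
    refine measure_mono_ae ?_
    filter_upwards [ae_mem_coeffLaw n] with t ht hbad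
    replace hbad : ∏ i, |rowVal α i (t i) y| ≤ W := hbad
    rw [← Finset.mul_prod_erase _ _ (Finset.mem_univ j)] at hbad
    have h1 := hy.trans (le_abs_rowVal hα (ht j) hj)
    have h2 : ∏ i ∈ Finset.univ.erase j, |rowVal α i (t i) y| ≤ W / 2 ^ ν := by
      rw [le_div_iff₀ hT, mul_comm]
      refine le_trans ?_ hbad
      gcongr
    show ENNReal.ofReal (W / 2 ^ ν) ^ (-s) ≤ f t
    have h3 : f t = ENNReal.ofReal (∏ i ∈ Finset.univ.erase j, |rowVal α i (t i) y|) ^ (-s) := by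
      rw [ENNReal.ofReal_prod_of_nonneg fun i _ => abs_nonneg _,
        ← ENNReal.prod_rpow_of_ne_top fun i _ => ENNReal.ofReal_ne_top]
      rfl
    rw [h3, ENNReal.rpow_neg, ENNReal.rpow_neg]
    gcongr
  refine hsub.trans ((meas_ge_le_lintegral_div hfm.aemeasurable ?_ ?_).trans ?_)
  · exact (ENNReal.rpow_pos (pos_iff_ne_zero.2 hW0) ENNReal.ofReal_ne_top).ne'
  · exact ENNReal.rpow_ne_top_of_ne_zero hW0 ENNReal.ofReal_ne_top
  rw [ENNReal.rpow_neg, div_eq_mul_inv, inv_inv, ENNReal.ofReal_rpow_of_nonneg (by positivity) hs,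
    mul_comm]
  gcongr
  rw [hf, lintegral_prod_rows]
  exact prod_erase_le (fun i => ∫⁻ u, negPow s (rowVal α i u y) ∂(Measure.pi fun _ => unif)) _
    (fun i hi => lintegral_row_le α hi ν hy) j

/-- The exponent `scaleExp ν` may be replaced by `1` up to a constant, because `w` decays at most
polynomially. -/
lemma exists_scale_weight_le {w : ℝ → ℝ} (hw_pos : ∀ t, 0 < t → 0 < w t) {C : ℝ} (hC : 1 ≤ C)
    (hdouble : ∀ t, 1 ≤ t → w t ≤ C * w (2 * t)) :
    ∃ C', 0 < C' ∧ ∀ ν : ℕ, (w (2 ^ ν) / 2 ^ ν) ^ scaleExp ν ≤ C' * (w (2 ^ ν) / 2 ^ ν) := by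
  have hlow : ∀ ν : ℕ, w 1 ≤ C ^ ν * w (2 ^ ν) := by
    intro ν
    induction ν with
    | zero => simp
    | succ ν ih =>
      have := hdouble (2 ^ ν) (one_le_pow₀ (by norm_num))
      calc w 1 ≤ C ^ ν * w (2 ^ ν) := ih
        _ ≤ C ^ ν * (C * w (2 * 2 ^ ν)) := by gcongr
        _ = _ := by rw [pow_succ, pow_succ, mul_comm (2 ^ ν : ℝ) 2]; ring
  have hw1 := hw_pos 1 one_pos
  set D := C * max 1 (1 / w 1) with hD
  have hm : 1 ≤ max 1 (1 / w 1) := le_max_left _ _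
  have hD1 : 1 ≤ D := one_le_mul_of_one_le_of_one_le hC hm
  refine ⟨2 * D, by positivity, fun ν => ?_⟩
  have hT : (0 : ℝ) < 2 ^ ν := by positivity
  have hw := hw_pos _ hT
  have hinv : 1 / w (2 ^ ν) ≤ D ^ (ν + 1) := by
    have h1 : 1 / w (2 ^ ν) ≤ C ^ ν * (1 / w 1) := by
      rw [mul_one_div, div_le_div_iff₀ hw hw1, one_mul]; exact hlow ν
    calc 1 / w (2 ^ ν) ≤ C ^ ν * (1 / w 1) := h1
      _ ≤ C ^ (ν + 1) * max 1 (1 / w 1) ^ (ν + 1) := by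
          gcongr
          · exact Nat.le_succ ν
          · exact (le_max_right _ _).trans (le_self_pow₀ hm (by omega))
      _ = D ^ (ν + 1) := by rw [hD, mul_pow]
  have h1s : 0 ≤ 1 - scaleExp ν := by linarith [scaleExp_lt_one ν]
  have h2 : (2 ^ ν / w (2 ^ ν)) ^ (1 - scaleExp ν) ≤ 2 * D := by
    rw [div_eq_mul_one_div, Real.mul_rpow hT.le (by positivity)]
    refine mul_le_mul (scale_rpow_le ν) ?_ (by positivity) (by norm_num)
    calc (1 / w (2 ^ ν)) ^ (1 - scaleExp ν) ≤ (D ^ (ν + 1)) ^ (1 - scaleExp ν) := by gcongr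
      _ = D := by
        rw [one_sub_scaleExp, ← Nat.cast_add_one, one_div,
          Real.pow_rpow_inv_natCast (by linarith) (by omega)]
  have hx : (0 : ℝ) < w (2 ^ ν) / 2 ^ ν := by positivity
  calc (w (2 ^ ν) / 2 ^ ν) ^ scaleExp ν
      = (2 ^ ν / w (2 ^ ν)) ^ (1 - scaleExp ν) * (w (2 ^ ν) / 2 ^ ν) := by
        rw [← inv_div (w (2 ^ ν)), Real.inv_rpow hx.le, ← Real.rpow_neg hx.le]
        nth_rewrite 3 [← Real.rpow_one (w (2 ^ ν) / 2 ^ ν)]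
        rw [← Real.rpow_add hx]
        congr 1; ring
    _ ≤ _ := by gcongr

/-! ### Summation over a dyadic shell -/

/-- The integers of absolute value at most `2 * 2 ^ ν`. -/
def dyadicRange (ν : ℕ) : Finset ℤ := Finset.Icc (-(2 * 2 ^ ν)) (2 * 2 ^ ν)

lemma card_dyadicRange_le (ν : ℕ) : (dyadicRange ν).card ≤ 5 * 2 ^ ν := by
  have : (1 : ℤ) ≤ 2 ^ ν := one_le_pow₀ (by norm_num)
  rw [dyadicRange, Int.card_Icc]
  zify
  rw [Int.toNat_of_nonneg (by linarith)]
  linarith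

lemma mem_dyadicRange {ν : ℕ} {a : ℤ} : a ∈ dyadicRange ν ↔ |(a : ℝ)| ≤ 2 * 2 ^ ν := by
  rw [dyadicRange, Finset.mem_Icc, ← abs_le]
  exact_mod_cast Iff.rfl

lemma sum_piFinset_cons {m : ℕ} (F : Finset ℤ) (f : (Fin (m + 1) → ℤ) → ENNReal) :
    ∑ y ∈ Fintype.piFinset (fun _ : Fin (m + 1) => F), f y
      = ∑ v ∈ Fintype.piFinset (fun _ : Fin m => F), ∑ a ∈ F, f (Fin.cons a v) := by
  rw [← Finset.sum_product']
  refine Finset.sum_nbij' (fun y => (Fin.tail y, y 0)) (fun x => Fin.cons x.2 x.1) ?_ ?_ ?_ ?_ ?_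
  · intro y hy
    rw [Fintype.mem_piFinset] at hy
    exact Finset.mem_product.2 ⟨Fintype.mem_piFinset.2 fun i => hy _, hy 0⟩
  · intro x hx
    rw [Finset.mem_product, Fintype.mem_piFinset] at hx
    rw [Fintype.mem_piFinset]
    intro i
    refine Fin.cases ?_ (fun j => ?_) i
    · exact hx.2
    · exact hx.1 j
  · intro y _; exact Fin.cons_self_tail y
  · intro x _; simp
  · intro y _; simp

lemma rowVal_cons {n : ℕ} (α : ℝ) (u : Fin (n + 3) → ℝ) (a : ℤ) (v : Fin (n + 2) → ℤ) :
    rowVal α 2 u (fun j => ((Fin.cons a v : Fin (n + 3) → ℤ) j : ℝ))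
      = rowVal α 2 u (fun j => ((Fin.cons 0 v : Fin (n + 3) → ℤ) j : ℝ)) - a := by
  have h2 : (2 : Fin (n + 3)) = Fin.succ 1 := rfl
  unfold rowVal
  rw [Fin.sum_univ_succ, Fin.sum_univ_succ (n := n + 2)]
  simp only [h2, Fin.cons_succ, Fin.cons_zero]
  simp only [residEntry, ← h2]
  simp
  ring

lemma rowVal_planar {n : ℕ} (α : ℝ) (u : Fin (n + 3) → ℝ) (y : Fin (n + 3) → ℝ)
    (hy : ∀ j, j ≠ 0 → j ≠ 1 → y j = 0) : rowVal α 2 u y = α * y 1 - y 0 := by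
  have h10 : (1 : Fin (n + 3)) ≠ 0 := by simp
  have h20 : (2 : Fin (n + 3)) ≠ 0 := Fin.succ_ne_zero (1 : Fin (n + 2))
  have h21 : (2 : Fin (n + 3)) ≠ 1 := by
    intro h
    have h' : Fin.succ (1 : Fin (n + 2)) = Fin.succ 0 := h
    exact absurd (Fin.succ_injective _ h') (by simp)
  unfold rowVal
  rw [hy 2 h20 h21, mul_zero, zero_add, ← Finset.add_sum_erase _ _ (Finset.mem_univ 0),
    ← Finset.add_sum_erase _ _ (Finset.mem_erase.2 ⟨h10, Finset.mem_univ 1⟩),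
    Finset.sum_eq_zero]
  · simp [residEntry, h10]; ring
  · intro j hj
    rw [hy j (Finset.ne_of_mem_erase (Finset.mem_of_mem_erase hj)) (Finset.ne_of_mem_erase hj),
      mul_zero]

lemma sum_generic_le {n : ℕ} (α : ℝ) (ν : ℕ) {v : Fin (n + 2) → ℤ}
    (hv : ∀ j, v j ∈ dyadicRange ν) (hv0 : ∃ j, j ≠ 0 ∧ v j ≠ 0) :
    ∑ a ∈ dyadicRange ν, ∫⁻ u, negPow (scaleExp ν)
        (rowVal α 2 u (fun j => ((Fin.cons a v : Fin (n + 3) → ℤ) j : ℝ)))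
        ∂(Measure.pi fun _ => unif)
      ≤ ENNReal.ofReal (388 * (ν + 1)) := by
  obtain ⟨j, hj, hvj⟩ := hv0
  have hmeas : ∀ a : ℤ, Measurable fun u => negPow (scaleExp ν)
      (rowVal α 2 u (fun j => ((Fin.cons a v : Fin (n + 3) → ℤ) j : ℝ))) :=
    fun a => (measurable_negPow _).comp (measurable_rowVal α 2 _)
  rw [← lintegral_finsetSum _ fun a _ => hmeas a]
  refine lintegral_pi_le_of_update (Finset.measurable_fun_sum _ fun a _ => hmeas a) j.succ
    fun u => ?_
  have hjs : ¬ ((2 : Fin (n + 3)) = 2 ∧ (j.succ = 0 ∨ j.succ = 1)) := by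
    rintro ⟨-, h | h⟩
    · exact Fin.succ_ne_zero j h
    · exact hj (Fin.succ_injective _ (h.trans Fin.succ_zero_eq_one.symm))
  have h : ∀ (t : ℝ) (a : ℤ), rowVal α 2 (Function.update u j.succ t)
      (fun j => ((Fin.cons a v : Fin (n + 3) → ℤ) j : ℝ))
      = rowVal α 2 (Function.update u j.succ 0)
      (fun j => ((Fin.cons 0 v : Fin (n + 3) → ℤ) j : ℝ)) - a + t * (v j : ℝ) := by
    intro t a
    rw [rowVal_update α hjs, rowVal_cons, Fin.cons_succ]
  refine (lintegral_congr fun t => Finset.sum_congr rfl fun a _ =>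
    congrArg (negPow (scaleExp ν)) (h t a)).trans_le ?_
  exact lintegral_sum_shift_le ν _ (card_dyadicRange_le ν) _ hvj (mem_dyadicRange.1 (hv j))

lemma sum_planar_le {n : ℕ} (α : ℝ) (ν : ℕ) {v : Fin (n + 2) → ℤ}
    (hv0 : ∀ j, j ≠ 0 → v j = 0) :
    ∑ a ∈ (dyadicRange ν).filter (fun a : ℤ => 1 / (16 * 2 ^ ν) ≤ |α * v 0 - (a : ℝ)|),
        ∫⁻ u, negPow (scaleExp ν)
        (rowVal α 2 u (fun j => ((Fin.cons a v : Fin (n + 3) → ℤ) j : ℝ)))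
        ∂(Measure.pi fun _ => unif)
      ≤ ENNReal.ofReal (188 * 2 ^ ν * (ν + 1)) := by
  have h : ∀ (u : Fin (n + 3) → ℝ) (a : ℤ), rowVal α 2 u
      (fun j => ((Fin.cons a v : Fin (n + 3) → ℤ) j : ℝ)) = α * v 0 - a := by
    intro u a
    rw [rowVal_planar α u _ fun j hj0 hj1 => ?_]
    · rw [Fin.cons_zero, ← Fin.succ_zero_eq_one, Fin.cons_succ]
    · obtain ⟨k, rfl⟩ := Fin.exists_succ_eq.2 hj0
      rw [Fin.cons_succ, hv0 k (fun hk => hj1 (by rw [hk]; rfl)), Int.cast_zero]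
  simp only [h, lintegral_const, measure_univ, mul_one]
  exact sum_shift_le ν _ (card_dyadicRange_le ν) _

/-- The integer points of a dyadic shell that lie outside the set of planar points
`(a, b, 0, …, 0)` with `E a b`. -/
def shell {n : ℕ} (E : ℤ → ℤ → Prop) (ν : ℕ) : Set (Fin (n + 3) → ℤ) :=
  {y | 2 ^ ν ≤ ‖fun j => (y j : ℝ)‖ ∧ ‖fun j => (y j : ℝ)‖ ≤ 2 * 2 ^ ν ∧
    ¬ ((∀ j, j ≠ 0 → j ≠ 1 → y j = 0) ∧ E (y 0) (y 1))}

lemma card_piFinset_le (m ν : ℕ) :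
    ((Fintype.piFinset fun _ : Fin m => dyadicRange ν).card : ENNReal)
      ≤ ENNReal.ofReal ((5 * 2 ^ ν) ^ m) := by
  rw [Fintype.card_piFinset, Finset.prod_const, Finset.card_univ, Fintype.card_fin,
    ← ENNReal.ofReal_natCast]
  refine ENNReal.ofReal_le_ofReal ?_
  push_cast
  gcongr
  exact_mod_cast card_dyadicRange_le ν

open Classical in
lemma card_planar_le (m ν : ℕ) :
    (((Fintype.piFinset fun _ : Fin (m + 1) => dyadicRange ν).filter
      fun v => ∀ j, j ≠ 0 → v j = 0).card : ENNReal) ≤ ENNReal.ofReal (5 * 2 ^ ν) := by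
  rw [← ENNReal.ofReal_natCast]
  refine ENNReal.ofReal_le_ofReal ?_
  have h : ((Fintype.piFinset fun _ : Fin (m + 1) => dyadicRange ν).filter
      fun v => ∀ j, j ≠ 0 → v j = 0).card ≤ (dyadicRange ν).card := by
    refine Finset.card_le_card_of_injOn (fun v => v 0) ?_ ?_
    · intro v hv
      have := (Finset.mem_filter.1 hv).1
      exact Fintype.mem_piFinset.1 this 0
    · intro v hv v' hv' h0
      have h1 := (Finset.mem_filter.1 hv).2
      have h2 := (Finset.mem_filter.1 hv').2
      funext j
      by_cases hj : j = 0
      · rw [hj]; exact h0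
      · rw [h1 j hj, h2 j hj]
  exact_mod_cast h.trans (card_dyadicRange_le ν)

open Classical in
/-- The mean of `|row 2| ^ (-s)`, summed over a shell. Generic and planar points are treated
separately; for the latter there is no averaging, and one uses that `α * b - a` is not too
small. The loss of a factor `2 ^ ν` is compensated by the small number of planar points. -/
lemma sum_shell_le {n : ℕ} {α : ℝ} {E : ℤ → ℤ → Prop}
    (hE : ∀ (a b : ℤ) (Y : ℝ), 1 ≤ Y → |(b : ℝ)| ≤ Y → ¬ E a b → 1 / (8 * Y) ≤ |α * b - a|)
    (ν : ℕ) :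
    ∑ y ∈ (Fintype.piFinset fun _ : Fin (n + 3) => dyadicRange ν).filter (· ∈ shell E ν),
      ∫⁻ u, negPow (scaleExp ν) (rowVal α 2 u (fun j => (y j : ℝ))) ∂(Measure.pi fun _ => unif)
      ≤ ENNReal.ofReal (2000 * 5 ^ (n + 2) * (ν + 1) * (2 ^ ν) ^ (n + 2)) := by
  set F := dyadicRange ν
  have hT : (1 : ℝ) ≤ 2 ^ ν := one_le_pow₀ (by norm_num)
  have hν : (0 : ℝ) ≤ ν := Nat.cast_nonneg _
  rw [Finset.sum_filter, sum_piFinset_cons]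
  have hv : ∀ v ∈ Fintype.piFinset (fun _ : Fin (n + 2) => F),
      (∑ a ∈ F, if (Fin.cons a v : Fin (n + 3) → ℤ) ∈ shell E ν then
        ∫⁻ u, negPow (scaleExp ν) (rowVal α 2 u (fun j => ((Fin.cons a v : Fin (n + 3) → ℤ) j : ℝ)))
          ∂(Measure.pi fun _ => unif) else 0)
      ≤ ENNReal.ofReal (388 * (ν + 1)) +
        (if ∀ j, j ≠ 0 → v j = 0 then ENNReal.ofReal (188 * 2 ^ ν * (ν + 1)) else 0) := by
    intro v hv
    by_cases hv0 : ∀ j, j ≠ 0 → v j = 0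
    · rw [if_pos hv0]
      refine le_trans ?_ (le_add_self (a := ENNReal.ofReal (188 * 2 ^ ν * (ν + 1))))
      refine le_trans ?_ (sum_planar_le α ν hv0)
      rw [← Finset.sum_filter]
      refine Finset.sum_le_sum_of_subset fun a ha => ?_
      rw [Finset.mem_filter] at ha ⊢
      refine ⟨ha.1, ?_⟩
      have hb := mem_dyadicRange.1 (Fintype.mem_piFinset.1 hv 0)
      have := hE a (v 0) (2 * 2 ^ ν) (by linarith) hb fun hEab => ha.2.2.2 ⟨fun j hj0 hj1 => ?_, ?_⟩
      · rw [show (16 : ℝ) * 2 ^ ν = 8 * (2 * 2 ^ ν) by ring]; exact this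
      · obtain ⟨k, rfl⟩ := Fin.exists_succ_eq.2 hj0
        rw [Fin.cons_succ, hv0 k (fun hk => hj1 (by rw [hk]; rfl))]
      · rw [Fin.cons_zero, ← Fin.succ_zero_eq_one, Fin.cons_succ]; exact hEab
    · rw [if_neg hv0, add_zero]
      push Not at hv0
      refine le_trans (Finset.sum_le_sum fun a _ => ?_)
        (sum_generic_le α ν (Fintype.mem_piFinset.1 hv) hv0)
      split_ifs
      · exact le_rfl
      · exact zero_le
  refine (Finset.sum_le_sum hv).trans ?_
  rw [Finset.sum_add_distrib, Finset.sum_const, nsmul_eq_mul, ← Finset.sum_filter,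
    Finset.sum_const, nsmul_eq_mul]
  refine (add_le_add (mul_le_mul_left (card_piFinset_le (n + 2) ν) _)
    (mul_le_mul_left (card_planar_le (n + 1) ν) _)).trans ?_
  rw [← ENNReal.ofReal_mul (by positivity), ← ENNReal.ofReal_mul (by positivity),
    ← ENNReal.ofReal_add (by positivity) (by positivity)]
  refine ENNReal.ofReal_le_ofReal ?_
  have h2 : (2 : ℝ) ^ ν * 2 ^ ν ≤ (2 ^ ν) ^ (n + 2) := by
    rw [← pow_two]; exact pow_le_pow_right₀ hT (by omega)
  have h5 : (1 : ℝ) ≤ 5 ^ (n + 2) := one_le_pow₀ (by norm_num)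
  rw [mul_pow]
  calc (5 : ℝ) ^ (n + 2) * (2 ^ ν) ^ (n + 2) * (388 * (ν + 1))
        + 5 * 2 ^ ν * (188 * 2 ^ ν * (ν + 1))
      = 5 ^ (n + 2) * (2 ^ ν) ^ (n + 2) * (388 * (ν + 1))
        + 1 * (2 ^ ν * 2 ^ ν) * (940 * (ν + 1)) := by ring
    _ ≤ 5 ^ (n + 2) * (2 ^ ν) ^ (n + 2) * (388 * (ν + 1))
        + 5 ^ (n + 2) * (2 ^ ν) ^ (n + 2) * (940 * (ν + 1)) := by gcongr
    _ = 1328 * (5 ^ (n + 2) * (ν + 1) * (2 ^ ν) ^ (n + 2)) := by ring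
    _ ≤ 2000 * (5 ^ (n + 2) * (ν + 1) * (2 ^ ν) ^ (n + 2)) := by gcongr; norm_num
    _ = _ := by ring

/-! ### The Borel–Cantelli argument -/

lemma mem_piFinset_of_norm_le {n ν : ℕ} {y : Fin (n + 3) → ℤ}
    (hy : ‖fun j => (y j : ℝ)‖ ≤ 2 * 2 ^ ν) :
    y ∈ Fintype.piFinset fun _ : Fin (n + 3) => dyadicRange ν :=
  Fintype.mem_piFinset.2 fun i => mem_dyadicRange.2
    ((norm_le_pi_norm (fun j => (y j : ℝ)) i).trans hy)

lemma measure_shell_le {n : ℕ} {α : ℝ} (hα : |α| ≤ 3) {E : ℤ → ℤ → Prop}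
    (hE : ∀ (a b : ℤ) (Y : ℝ), 1 ≤ Y → |(b : ℝ)| ≤ Y → ¬ E a b → 1 / (8 * Y) ≤ |α * b - a|)
    {w : ℝ → ℝ} (hw_pos : ∀ t, 0 < t → 0 < w t) {C : ℝ} (hC : 1 ≤ C)
    (hdouble : ∀ t, 1 ≤ t → w t ≤ C * w (2 * t)) :
    ∃ D : ℝ, 0 ≤ D ∧ ∀ ν : ℕ, coeffLaw n {t | ∃ y ∈ shell E ν,
        ∏ i, |rowVal α i (t i) (fun j => (y j : ℝ))| ≤ w (2 ^ ν)}
      ≤ ENNReal.ofReal (D * ((ν + 1) ^ (n + 2) * w (2 ^ ν))) := by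
  classical
  obtain ⟨C', hC', hCw⟩ := exists_scale_weight_le hw_pos hC hdouble
  refine ⟨C' * 6 ^ (n + 1) * (2000 * 5 ^ (n + 2) + 6 * 5 ^ (n + 3)), by positivity, fun ν => ?_⟩
  have hT : (0 : ℝ) < 2 ^ ν := by positivity
  have hw := hw_pos _ hT
  set G := (Fintype.piFinset fun _ : Fin (n + 3) => dyadicRange ν).filter (· ∈ shell E ν) with hG
  set W := w (2 ^ ν) with hW_def
  set c : ENNReal := ENNReal.ofReal (6 * (ν + 1) / 2 ^ ν) with hc
  have hsub : {t : Fin (n + 3) → Fin (n + 3) → ℝ | ∃ y ∈ shell E ν,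
        ∏ i, |rowVal α i (t i) (fun j => (y j : ℝ))| ≤ W}
        ⊆ ⋃ y ∈ G, {t | ∏ i, |rowVal α i (t i) (fun j => (y j : ℝ))| ≤ W} := by
    rintro t ⟨y, hy, hyt⟩
    refine Set.mem_biUnion (x := y) ?_ hyt
    exact Finset.mem_coe.2 (Finset.mem_filter.2 ⟨mem_piFinset_of_norm_le hy.2.1, hy⟩)
  have hcard : (G.card : ENNReal) ≤ ENNReal.ofReal ((5 * 2 ^ ν) ^ (n + 3)) := by
    refine le_trans ?_ (card_piFinset_le (n + 3) ν)
    exact_mod_cast Finset.card_filter_le _ _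
  calc coeffLaw n _ ≤ ∑ y ∈ G, coeffLaw n {t | ∏ i, |rowVal α i (t i) (fun j => (y j : ℝ))| ≤ W} :=
        (measure_mono hsub).trans (measure_biUnion_finset_le _ _)
    _ ≤ ∑ y ∈ G, ENNReal.ofReal ((W / 2 ^ ν) ^ scaleExp ν) * (c ^ (n + 1) *
          ((∫⁻ u, negPow (scaleExp ν) (rowVal α (2 : Fin (n + 3)) u (fun j => (y j : ℝ)))
            ∂(Measure.pi fun _ => unif)) + c)) :=
        Finset.sum_le_sum fun y hy =>
          measure_prod_le hα ν (Finset.mem_filter.1 hy).2.1 hw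
    _ = ENNReal.ofReal ((W / 2 ^ ν) ^ scaleExp ν) * (c ^ (n + 1) *
          ((∑ y ∈ G, ∫⁻ u, negPow (scaleExp ν) (rowVal α (2 : Fin (n + 3)) u (fun j => (y j : ℝ)))
            ∂(Measure.pi fun _ => unif)) + G.card * c)) := by
        rw [← Finset.mul_sum, ← Finset.mul_sum, Finset.sum_add_distrib, Finset.sum_const,
          nsmul_eq_mul]
    _ ≤ ENNReal.ofReal (C' * (W / 2 ^ ν)) * (c ^ (n + 1) *
          (ENNReal.ofReal (2000 * 5 ^ (n + 2) * (ν + 1) * (2 ^ ν) ^ (n + 2))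
            + ENNReal.ofReal ((5 * 2 ^ ν) ^ (n + 3)) * c)) := by
        gcongr
        · exact hCw ν
        · exact sum_shell_le hE ν
    _ = _ := by
        rw [hc, ← ENNReal.ofReal_pow (by positivity), ← ENNReal.ofReal_mul (by positivity),
          ← ENNReal.ofReal_add (by positivity) (by positivity),
          ← ENNReal.ofReal_mul (by positivity), ← ENNReal.ofReal_mul (by positivity)]
        congr 1
        rw [div_pow, mul_pow, mul_pow]
        field_simp
        ring

/-- For almost every choice of the coefficients, the product of the coordinates is small only at
finitely many integer points outside the set of planar points `(a, b, 0, …, 0)` with `E a b`. -/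
lemma exists_coeff {n : ℕ} {α : ℝ} (hα : |α| ≤ 3) {E : ℤ → ℤ → Prop}
    (hE : ∀ (a b : ℤ) (Y : ℝ), 1 ≤ Y → |(b : ℝ)| ≤ Y → ¬ E a b → 1 / (8 * Y) ≤ |α * b - a|)
    {w : ℝ → ℝ} (hw_pos : ∀ t, 0 < t → 0 < w t) (hw_anti : AntitoneOn w (Set.Ioi 0))
    {C : ℝ} (hC : 1 ≤ C) (hdouble : ∀ t, 1 ≤ t → w t ≤ C * w (2 * t))
    (hw_sum : Summable fun ν : ℕ => (ν : ℝ) ^ (n + 2) * w (2 ^ ν)) :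
    ∃ t : Fin (n + 3) → Fin (n + 3) → ℝ, (∀ i j, t i j ∈ Set.Icc (1 : ℝ) 2) ∧
      {y : Fin (n + 3) → ℤ | ¬ ((∀ j, j ≠ 0 → j ≠ 1 → y j = 0) ∧ E (y 0) (y 1)) ∧
        ∏ i, |rowVal α i (t i) (fun j => (y j : ℝ))| ≤ w ‖fun j => (y j : ℝ)‖}.Finite := by
  obtain ⟨D, hD, hmeas⟩ := measure_shell_le (n := n) hα hE hw_pos hC hdouble
  have hsummable : Summable fun ν : ℕ => D * (((ν : ℝ) + 1) ^ (n + 2) * w (2 ^ ν)) := by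
    refine Summable.mul_left D ((summable_nat_add_iff 1).1 ?_)
    refine Summable.of_nonneg_of_le (fun ν => ?_) (fun ν => ?_)
      (((summable_nat_add_iff 1).2 hw_sum).mul_left (2 ^ (n + 2)))
    · have := hw_pos (2 ^ (ν + 1)) (by positivity)
      positivity
    · have := hw_pos (2 ^ (ν + 1)) (by positivity)
      rw [← mul_assoc, ← mul_pow]
      have hν : (0 : ℝ) ≤ ν := Nat.cast_nonneg _
      gcongr
      push_cast
      linarith
  have hfin : ∑' ν : ℕ, coeffLaw n {t | ∃ y ∈ shell E ν,
      ∏ i, |rowVal α i (t i) (fun j => (y j : ℝ))| ≤ w (2 ^ ν)} ≠ ⊤ :=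
    ne_top_of_le_ne_top hsummable.tsum_ofReal_ne_top (ENNReal.tsum_le_tsum hmeas)
  obtain ⟨t, ht1, ht2⟩ := ((ae_mem_coeffLaw n).and (ae_eventually_notMem hfin)).exists
  refine ⟨t, ht1, ?_⟩
  obtain ⟨N, hN⟩ := eventually_atTop.1 ht2
  refine (Finset.finite_toSet (Fintype.piFinset fun _ : Fin (n + 3) => dyadicRange N)).subset ?_
  rintro y ⟨hyE, hy⟩
  -- Some coordinate is nonzero, since `E 0 0` follows from the lower bound on `α * b - a`.
  have hy0 : ∃ j, y j ≠ 0 := by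
    by_contra! h
    refine hyE ⟨fun j _ _ => h j, ?_⟩
    by_contra hE0
    have := hE (y 0) (y 1) 1 le_rfl (by rw [h]; simp) hE0
    rw [h, h] at this
    norm_num at this
  obtain ⟨j, hj⟩ := hy0
  have hy1 : 1 ≤ ‖fun j => (y j : ℝ)‖ := by
    refine le_trans ?_ (norm_le_pi_norm (fun j => (y j : ℝ)) j)
    rw [Real.norm_eq_abs]
    exact_mod_cast Int.one_le_abs hj
  obtain ⟨ν, hν1, hν2⟩ := exists_nat_pow_near hy1 one_lt_two
  have hνN : ν < N := by
    by_contra! h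
    refine hN ν h ⟨y, ⟨hν1, ?_, hyE⟩, hy.trans ?_⟩
    · rw [mul_comm, ← pow_succ]; exact hν2.le
    · have hT : (0 : ℝ) < 2 ^ ν := by positivity
      exact hw_anti hT (hT.trans_le hν1) hν1
  refine Finset.mem_coe.2 (mem_piFinset_of_norm_le (hν2.le.trans ?_))
  calc (2 : ℝ) ^ (ν + 1) ≤ 2 ^ N := pow_le_pow_right₀ (by norm_num) (by omega)
    _ ≤ 2 * 2 ^ N := by linarith [show (0 : ℝ) < 2 ^ N by positivity]

/-! ### A lattice with the correct order of magnitude -/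

/-- The linear map with rows `rowVal`. -/
def rowLin {n : ℕ} (α : ℝ) (t : Fin (n + 3) → Fin (n + 3) → ℝ) :
    (Fin (n + 3) → ℝ) →ₗ[ℝ] (Fin (n + 3) → ℝ) where
  toFun y i := rowVal α i (t i) y
  map_add' y z := by
    funext i
    simp only [rowVal, Pi.add_apply, mul_add, Finset.sum_add_distrib]
    ring
  map_smul' m y := by
    funext i
    simp only [rowVal, Pi.smul_apply, smul_eq_mul, RingHom.id_apply, mul_add, Finset.mul_sum]
    refine congrArg₂ _ (by ring) (Finset.sum_congr rfl fun j _ => by ring)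

lemma rowLin_apply {n : ℕ} (α : ℝ) (t : Fin (n + 3) → Fin (n + 3) → ℝ) (y : Fin (n + 3) → ℝ)
    (i : Fin (n + 3)) : rowLin α t y i = rowVal α i (t i) y := rfl

/-- The planar integer vector `(a, b, 0, …, 0)`. -/
def planar {n : ℕ} (a b : ℤ) (j : Fin (n + 3)) : ℤ := if j = 0 then a else if j = 1 then b else 0

lemma planar_mul {n : ℕ} (m a b : ℤ) : (fun j : Fin (n + 3) => (planar (m * a) (m * b) j : ℝ))
    = (m : ℝ) • fun j : Fin (n + 3) => (planar a b j : ℝ) := by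
  funext j
  simp only [planar, Pi.smul_apply, smul_eq_mul]
  split_ifs <;> simp

lemma rowVal_two_planar {n : ℕ} (α : ℝ) (u : Fin (n + 3) → ℝ) (a b : ℤ) :
    rowVal α 2 u (fun j => (planar a b j : ℝ)) = b * α - a := by
  rw [rowVal_planar α u _ fun j h0 h1 => by simp [planar, h0, h1]]
  simp [planar, mul_comm]

lemma le_rowVal_planar {n : ℕ} (α : ℝ) {i : Fin (n + 3)} (hi : i ≠ 2) {u : Fin (n + 3) → ℝ}
    (hu : ∀ j, u j ∈ Set.Icc (1 : ℝ) 2) {a b : ℤ} (ha : 0 ≤ a) (hb : 0 ≤ b) :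
    (b : ℝ) ≤ rowVal α i u (fun j => (planar a b j : ℝ)) := by
  have h0 : ∀ j : Fin (n + 3), (0 : ℝ) ≤ (planar a b j : ℝ) := by
    intro j
    unfold planar
    split_ifs
    · exact_mod_cast ha
    · exact_mod_cast hb
    · simp
  have hres : ∀ j, residEntry α i u j = u j := by
    intro j; simp [residEntry, hi]
  unfold rowVal
  have h1 : residEntry α i u 1 * (planar a b (1 : Fin (n + 3)) : ℝ)
      ≤ ∑ j, residEntry α i u j * (planar a b j : ℝ) := by
    refine Finset.single_le_sum (f := fun j => residEntry α i u j * (planar a b j : ℝ))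
      (fun j _ => ?_) (Finset.mem_univ 1)
    show 0 ≤ residEntry α i u j * (planar a b j : ℝ)
    rw [hres]
    exact mul_nonneg (by linarith [(hu j).1]) (h0 j)
  have h2 : (planar a b (1 : Fin (n + 3)) : ℝ) = b := by simp [planar]
  rw [hres, h2] at h1
  have hbR : (0 : ℝ) ≤ b := by exact_mod_cast hb
  have h3 : 0 ≤ (3 * ((n : ℝ) + 3) + 1) * (planar a b i : ℝ) := mul_nonneg (by positivity) (h0 i)
  have h4 : 1 * (b : ℝ) ≤ u 1 * b := by gcongr; exact (hu 1).1
  linarith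

lemma norm_planar_le {n : ℕ} {a b : ℤ} (ha : 0 ≤ a) (hb : 0 ≤ b) (hab : (a : ℝ) ≤ 3 * b) :
    ‖fun j : Fin (n + 3) => (planar a b j : ℝ)‖ ≤ 3 * b := by
  have hbR : (0 : ℝ) ≤ b := by exact_mod_cast hb
  have haR : (0 : ℝ) ≤ a := by exact_mod_cast ha
  refine (pi_norm_le_iff_of_nonneg (by positivity)).2 fun j => ?_
  rw [Real.norm_eq_abs]
  unfold planar
  split_ifs
  · rwa [abs_of_nonneg haR]
  · rw [abs_of_nonneg hbR]; linarith
  · simpa using hbR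

lemma le_norm_planar {n : ℕ} (a b : ℤ) :
    (b : ℝ) ≤ ‖fun j : Fin (n + 3) => (planar a b j : ℝ)‖ := by
  refine le_trans ?_ (norm_le_pi_norm (fun j : Fin (n + 3) => (planar a b j : ℝ)) 1)
  simp [planar, le_abs_self]

/-- An integer point with `a * q = b * p` and `p`, `q` coprime is a multiple of `(p, q)`. -/
lemma eq_planar_mul {n : ℕ} {y : Fin (n + 3) → ℤ} (hy : ∀ j, j ≠ 0 → j ≠ 1 → y j = 0) {p q : ℤ}
    (hq : 0 < q) (hpq : IsCoprime p q) (h : y 0 * q = y 1 * p) :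
    ∃ m : ℤ, y = planar (m * p) (m * q) := by
  obtain ⟨m, hm⟩ : q ∣ y 1 := hpq.symm.dvd_of_dvd_mul_right ⟨y 0, by rw [← h]; ring⟩
  have h0 : y 0 = m * p := by
    have : q * (y 0) = q * (m * p) := by rw [mul_comm, h, hm]; ring
    exact mul_left_cancel₀ hq.ne' this
  refine ⟨m, funext fun j => ?_⟩
  unfold planar
  split_ifs with hj0 hj1
  · rw [hj0, h0]
  · rw [hj1, hm]; ring
  · exact hy j hj0 hj1

/-- A lattice for which `w` is the exact order of magnitude of the small values of the product.
They are attained at the approximation vectors `(p, q, 0, …, 0)`, where the special row alone makes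
the product small. -/
lemma exists_lattice_order {n : ℕ} {w : ℝ → ℝ} (hw_pos : ∀ t, 0 < t → 0 < w t)
    (hw_anti : AntitoneOn w (Set.Ioi 0))
    (hw_reg : Tendsto (fun δ : ℝ => sSup {r : ℝ | ∃ t : ℝ, 1 ≤ t ∧ r = w t / w ((1 + δ) * t)})
      (nhdsWithin 0 (Set.Ioi 0)) (nhds 1))
    (hw_sum : Summable fun ν : ℕ => (ν : ℝ) ^ (n + 2) * w (2 ^ ν)) :
    ∃ A : (Fin (n + 3) → ℝ) →ₗ[ℝ] (Fin (n + 3) → ℝ), (∀ y, ‖y‖ ≤ ‖A y‖) ∧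
      (∃ c, 0 < c ∧ {y : Fin (n + 3) → ℤ |
        ∏ i, |A (fun j => (y j : ℝ)) i| ≤ c * w ‖A (fun j => (y j : ℝ))‖}.Finite) ∧
      ∃ C, 0 < C ∧ {y : Fin (n + 3) → ℤ |
        ∏ i, |A (fun j => (y j : ℝ)) i| ≤ C * w ‖A (fun j => (y j : ℝ))‖}.Infinite := by
  have hw1 := hw_pos 1 one_pos
  set H : ℤ → ℝ := fun q => 4 * q + (q : ℝ) ^ (n + 2) / w q with hH_def
  have hH : ∀ q : ℤ, 1 ≤ q → 4 * (q : ℝ) ≤ H q := by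
    intro q hq
    have hqR : (1 : ℝ) ≤ q := by exact_mod_cast hq
    have := hw_pos q (by linarith)
    have : 0 ≤ (q : ℝ) ^ (n + 2) / w q := by positivity
    simp only [hH_def]
    linarith
  obtain ⟨α, p, q, hα, hp, hq, hpq, hqmono, hpq3, hlow, hup, hE⟩ := exists_alpha H hH
  obtain ⟨C₂, hC₂, hdouble⟩ := weight_doubling hw_pos hw_anti hw_reg (M := 2) two_pos
  obtain ⟨t, ht, hfin⟩ := exists_coeff (n := n) (E := fun a b => ∃ k, a * q k = b * p k) hα
    (fun a b Y h1 h2 h3 => hE a b Y h1 h2 fun k hk => h3 ⟨k, hk⟩)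
    hw_pos hw_anti hC₂ hdouble hw_sum
  set M : ℝ := (6 * ((n : ℝ) + 3) + 1) * 3 with hM_def
  have hM : 0 < M := by positivity
  obtain ⟨C₃, hC₃, hMw⟩ := weight_doubling hw_pos hw_anti hw_reg hM
  have hqR : ∀ k, (1 : ℝ) ≤ q k := fun k => by exact_mod_cast hq k
  have hcard : (Finset.univ.erase (2 : Fin (n + 3))).card = n + 2 := by
    rw [Finset.card_erase_of_mem (Finset.mem_univ _), Finset.card_univ, Fintype.card_fin]; rfl
  set A := rowLin α t with hA
  have hdom : ∀ y, ‖y‖ ≤ ‖A y‖ := fun y => norm_le_norm_rowVal hα ht y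
  refine ⟨A, hdom, ⟨1 / (4 * (4 * w 1 + 1)), by positivity, ?_⟩,
    ⟨M ^ (n + 2) * 2 * C₃, by positivity, ?_⟩⟩
  · set c := 1 / (4 * (4 * w 1 + 1)) with hc_def
    have hc : 0 < c := by positivity
    have hc1 : c ≤ 1 := by
      rw [hc_def, div_le_one (by positivity)]; linarith
    refine (hfin.union (Set.finite_singleton 0)).subset fun y hy => ?_
    by_cases hy0 : y = 0
    · exact Or.inr hy0
    replace hy : ∏ i, |A (fun j => (y j : ℝ)) i| ≤ c * w ‖A (fun j => (y j : ℝ))‖ := hy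
    left
    refine ⟨?_, ?_⟩
    · rintro ⟨hpl, k, hk⟩
      obtain ⟨m, rfl⟩ := eq_planar_mul hpl (hq k) (hpq k) hk
      have hm : m ≠ 0 := by
        rintro rfl
        apply hy0
        funext j
        simp [planar]
      have hm1 : (1 : ℝ) ≤ |(m : ℝ)| := by exact_mod_cast Int.one_le_abs hm
      have hqk := hqR k
      have hqk0 : (0 : ℝ) < q k := by linarith
      have hwq := hw_pos _ hqk0
      set z : Fin (n + 3) → ℝ := fun j => (planar (p k) (q k) j : ℝ) with hz
      rw [planar_mul, map_smul, norm_smul, Real.norm_eq_abs] at hy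
      have hAz : (q k : ℝ) ≤ ‖A z‖ := (le_norm_planar _ _).trans (hdom z)
      have hHk : 0 < H (q k) := by have := hH (q k) (hq k); linarith
      -- The scalar `m` only increases the product, so it is enough to bound it for `m = 1`.
      have h1 : ∏ i, |A z i| ≤ ∏ i, |((m : ℝ) • A z) i| := by
        refine Finset.prod_le_prod (fun i _ => abs_nonneg _) fun i _ => ?_
        rw [Pi.smul_apply, smul_eq_mul, abs_mul]
        exact le_mul_of_one_le_left (abs_nonneg _) hm1
      have h2 : 1 / (2 * H (q k)) * (q k : ℝ) ^ (n + 2) ≤ ∏ i, |A z i| := by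
        rw [← Finset.mul_prod_erase _ _ (Finset.mem_univ 2), ← hcard, ← Finset.prod_const]
        refine mul_le_mul ?_ ?_ (by positivity) (abs_nonneg _)
        · rw [hA, rowLin_apply, rowVal_two_planar]
          exact (hlow k).trans (le_abs_self _)
        · refine Finset.prod_le_prod (fun i _ => hqk0.le) fun i hi => ?_
          exact (le_rowVal_planar α (Finset.ne_of_mem_erase hi) (ht i) (hp k).le
            (hq k).le).trans (le_abs_self _)
      have h3 : w (|(m : ℝ)| * ‖A z‖) ≤ w (q k) := by
        have h : (q k : ℝ) ≤ |(m : ℝ)| * ‖A z‖ :=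
          hAz.trans (le_mul_of_one_le_left (norm_nonneg _) hm1)
        exact hw_anti hqk0 (hqk0.trans_le h) h
      have h4 : H (q k) * w (q k) ≤ (4 * w 1 + 1) * (q k : ℝ) ^ (n + 2) := by
        have hw' : w (q k) ≤ w 1 := hw_anti (Set.mem_Ioi.2 one_pos) hqk0 hqk
        have hpow : (q k : ℝ) ≤ (q k : ℝ) ^ (n + 2) := le_self_pow₀ hqk (by omega)
        have : H (q k) * w (q k) = 4 * ((q k : ℝ) * w (q k)) + (q k : ℝ) ^ (n + 2) := by
          simp only [hH_def]; field_simp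
        rw [this]
        have h5 : (q k : ℝ) * w (q k) ≤ (q k : ℝ) ^ (n + 2) * w 1 :=
          mul_le_mul hpow hw' hwq.le (by positivity)
        linarith
      have h5 : 2 * c * w (q k) ≤ 1 / (2 * H (q k)) * (q k : ℝ) ^ (n + 2) := by
        rw [hc_def, ← mul_div_assoc, mul_one, div_mul_eq_mul_div, div_mul_eq_mul_div, one_mul,
          div_le_div_iff₀ (by positivity) (by positivity)]
        nlinarith
      have h6 : c * w (|(m : ℝ)| * ‖A z‖) ≤ c * w (q k) := by gcongr
      have h7 : 0 < c * w (q k) := by positivity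
      linarith
    · have hpos : 0 < ‖fun j => (y j : ℝ)‖ := by
        rw [norm_pos_iff]
        intro h
        exact hy0 (funext fun j => by simpa using congrFun h j)
      have hpos' := hpos.trans_le (hdom _)
      refine hy.trans ?_
      calc c * w ‖A (fun j => (y j : ℝ))‖ ≤ 1 * w ‖A (fun j => (y j : ℝ))‖ := by
            have := hw_pos _ hpos'
            gcongr
        _ ≤ w ‖fun j => (y j : ℝ)‖ := by
            rw [one_mul]; exact hw_anti hpos hpos' (hdom _)
  · refine Set.infinite_of_injective_forall_mem
      (f := fun k => (planar (p k) (q k) : Fin (n + 3) → ℤ)) ?_ fun k => ?_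
    · intro k l hkl
      have := congrFun hkl 1
      simp only [planar] at this
      exact hqmono.injective (by simpa using this)
    · have hqk := hqR k
      have hqk0 : (0 : ℝ) < q k := by linarith
      have hwq := hw_pos _ hqk0
      set z : Fin (n + 3) → ℝ := fun j => (planar (p k) (q k) j : ℝ) with hz
      have hzn : ‖z‖ ≤ 3 * q k := norm_planar_le (hp k).le (hq k).le (hpq3 k)
      have hAz0 : 0 < ‖A z‖ := hqk0.trans_le ((le_norm_planar _ _).trans (hdom z))
      have hrow : ∀ i, |A z i| ≤ M * q k := by
        intro i
        refine (abs_rowVal_le hα i (ht i) z).trans ?_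
        rw [hM_def, mul_assoc]
        gcongr
      have hAz : ‖A z‖ ≤ M * q k :=
        (pi_norm_le_iff_of_nonneg (by positivity)).2 hrow
      have hHlow : (q k : ℝ) ^ (n + 2) / w (q k) ≤ H (q k) := by
        simp only [hH_def]; linarith
      show ∏ i, |A z i| ≤ M ^ (n + 2) * 2 * C₃ * w ‖A z‖
      rw [← Finset.mul_prod_erase _ _ (Finset.mem_univ 2)]
      have h2 : |A z 2| ≤ 2 * w (q k) / (q k : ℝ) ^ (n + 2) := by
        rw [hA, rowLin_apply, rowVal_two_planar]
        have hHk : 0 < H (q k) := by have := hH (q k) (hq k); linarith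
        have h0 : (0 : ℝ) ≤ 1 / (2 * H (q k)) := by positivity
        rw [abs_of_nonneg (h0.trans (hlow k))]
        refine (hup k).trans ?_
        calc 2 / H (q k) ≤ 2 / ((q k : ℝ) ^ (n + 2) / w (q k)) := by gcongr
          _ = _ := by rw [div_div_eq_mul_div]
      have h3 : ∏ i ∈ Finset.univ.erase (2 : Fin (n + 3)), |A z i| ≤ (M * q k) ^ (n + 2) := by
        rw [← hcard, ← Finset.prod_const]
        exact Finset.prod_le_prod (fun i _ => abs_nonneg _) fun i _ => hrow i
      calc |A z 2| * ∏ i ∈ Finset.univ.erase (2 : Fin (n + 3)), |A z i|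
          ≤ 2 * w (q k) / (q k : ℝ) ^ (n + 2) * (M * q k) ^ (n + 2) :=
            mul_le_mul h2 h3 (Finset.prod_nonneg fun i _ => abs_nonneg _) (by positivity)
        _ = M ^ (n + 2) * 2 * w (q k) := by rw [mul_pow]; field_simp
        _ ≤ M ^ (n + 2) * 2 * (C₃ * w ‖A z‖) := by
            gcongr
            refine (hMw _ hqk).trans ?_
            gcongr
            exact hw_anti hAz0 (hAz0.trans_le hAz) hAz
        _ = _ := by ring

/-! ### Scaling -/

/-- The lattice spanned by the images of the standard basis vectors. -/
lemma isFullLattice_range {d : ℕ} (A : (Fin d → ℝ) →ₗ[ℝ] (Fin d → ℝ)) (hA : Function.Injective A) :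
    IsFullLattice {x | ∃ y : Fin d → ℤ, x = A fun j => (y j : ℝ)} := by
  refine ⟨fun i => A (Pi.basisFun ℝ (Fin d) i),
    (Pi.basisFun ℝ (Fin d)).linearIndependent.map' A (LinearMap.ker_eq_bot.2 hA), ?_⟩
  have h : ∀ y : Fin d → ℤ, A (fun j => (y j : ℝ))
      = ∑ i, (y i : ℝ) • A (Pi.basisFun ℝ (Fin d) i) := by
    intro y
    simp_rw [← map_smul]
    rw [← map_sum]
    congr 1
    exact ((Pi.basisFun ℝ (Fin d)).sum_repr fun j => (y j : ℝ)).symm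
  ext x
  simp only [Set.mem_ofPred_eq, h]

lemma exists_and_not_succ {P : ℕ → Prop} (h0 : P 0) (h : ∃ N, ¬ P N) :
    ∃ N, P N ∧ ¬ P (N + 1) := by
  by_contra! hc
  obtain ⟨N, hN⟩ := h
  exact hN (Nat.rec h0 (fun k hk => hc k hk) N)

/-- Multiplying a lattice by a scalar moves the constant in front of `w`; this yields an asymptotic
constant that is within `ε` of `1`. -/
lemma exists_scaled_lattice {n : ℕ} {w : ℝ → ℝ} (hw_pos : ∀ t, 0 < t → 0 < w t)
    (hw_anti : AntitoneOn w (Set.Ioi 0))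
    (hw_reg : Tendsto (fun δ : ℝ => sSup {r : ℝ | ∃ t : ℝ, 1 ≤ t ∧ r = w t / w ((1 + δ) * t)})
      (nhdsWithin 0 (Set.Ioi 0)) (nhds 1))
    (A : (Fin (n + 3) → ℝ) →ₗ[ℝ] (Fin (n + 3) → ℝ)) (hdom : ∀ y, ‖y‖ ≤ ‖A y‖)
    {c : ℝ} (hc : 0 < c) (hfin : {y : Fin (n + 3) → ℤ |
        ∏ i, |A (fun j => (y j : ℝ)) i| ≤ c * w ‖A (fun j => (y j : ℝ))‖}.Finite)
    {C : ℝ} (hC : 0 < C) (hinf : {y : Fin (n + 3) → ℤ |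
        ∏ i, |A (fun j => (y j : ℝ)) i| ≤ C * w ‖A (fun j => (y j : ℝ))‖}.Infinite)
    {ε : ℝ} (hε : 0 < ε) (hε1 : ε < 1) :
    ∃ l : ℝ, 0 < l ∧
      {y : Fin (n + 3) → ℤ | l ^ (n + 3) * ∏ i, |A (fun j => (y j : ℝ)) i|
        ≤ w (l * ‖A (fun j => (y j : ℝ))‖)}.Infinite ∧
      {y : Fin (n + 3) → ℤ | l ^ (n + 3) * ∏ i, |A (fun j => (y j : ℝ)) i|
        ≤ (1 - ε) * w (l * ‖A (fun j => (y j : ℝ))‖)}.Finite := by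
  have hpos : ∀ y : Fin (n + 3) → ℤ, y ≠ 0 → 0 < ‖A (fun j => (y j : ℝ))‖ := by
    intro y hy
    refine lt_of_lt_of_le ?_ (hdom _)
    rw [norm_pos_iff]
    intro h
    exact hy (funext fun j => by simpa using congrFun h j)
  have hprod : ∀ y : Fin (n + 3) → ℤ, 0 ≤ ∏ i, |A (fun j => (y j : ℝ)) i| :=
    fun y => Finset.prod_nonneg fun i _ => abs_nonneg _
  -- `δ` is a ratio of scales over which both `w` and the product vary by less than `ε` permits.
  obtain ⟨δ, hδ0, hδw, hδ⟩ : ∃ δ : ℝ, 0 < δ ∧ (∀ t, 1 ≤ t → w t ≤ (1 + ε) * w ((1 + δ) * t)) ∧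
      (1 + δ) ^ (n + 3) * ((1 - ε) * (1 + ε)) ≤ 1 := by
    have h1 : Tendsto (fun δ : ℝ => (1 + δ) ^ (n + 3) * ((1 - ε) * (1 + ε)))
        (nhdsWithin 0 (Set.Ioi 0)) (nhds ((1 + 0) ^ (n + 3) * ((1 - ε) * (1 + ε)))) :=
      ((by fun_prop : Continuous fun δ : ℝ =>
        (1 + δ) ^ (n + 3) * ((1 - ε) * (1 + ε))).tendsto 0).mono_left nhdsWithin_le_nhds
    have h2 : (1 + 0) ^ (n + 3) * ((1 - ε) * (1 + ε)) < 1 := by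
      rw [add_zero, one_pow, one_mul]; nlinarith
    obtain ⟨δ, h⟩ := ((weight_step hw_pos hw_reg hε).and
      ((h1.eventually_le_const h2).and self_mem_nhdsWithin)).exists
    exact ⟨δ, h.2.2, h.1, h.2.1⟩
  set P : ℝ → Prop := fun l => {y : Fin (n + 3) → ℤ |
    l ^ (n + 3) * ∏ i, |A (fun j => (y j : ℝ)) i| ≤ w (l * ‖A (fun j => (y j : ℝ))‖)}.Infinite
    with hP
  obtain ⟨l₀, hl₀, hPl₀⟩ : ∃ l, 0 < l ∧ P l := by
    refine ⟨min 1 (1 / C), by positivity, ?_⟩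
    set l := min 1 (1 / C)
    have hl : 0 < l := by positivity
    have hl1 : l ≤ 1 := min_le_left _ _
    have hlC : l ^ (n + 3) * C ≤ 1 := by
      calc l ^ (n + 3) * C ≤ l * C := by
            gcongr; exact pow_le_of_le_one hl.le hl1 (by omega)
        _ ≤ 1 / C * C := by gcongr; exact min_le_right _ _
        _ = 1 := by field_simp
    refine (hinf.sdiff (Set.finite_singleton 0)).mono ?_
    rintro y ⟨hy, hy0⟩
    have hn := hpos y hy0
    have hw' := hw_pos _ hn
    calc l ^ (n + 3) * ∏ i, |A (fun j => (y j : ℝ)) i|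
        ≤ l ^ (n + 3) * (C * w ‖A (fun j => (y j : ℝ))‖) := by gcongr; exact hy
      _ = l ^ (n + 3) * C * w ‖A (fun j => (y j : ℝ))‖ := by ring
      _ ≤ 1 * w ‖A (fun j => (y j : ℝ))‖ := by gcongr
      _ ≤ w (l * ‖A (fun j => (y j : ℝ))‖) := by
          rw [one_mul]
          exact hw_anti (mul_pos hl hn) hn (mul_le_of_le_one_left hn.le hl1)
  have hlarge : ∀ l, 1 ≤ l → 1 / c ≤ l → ¬ P l := by
    intro l hl1 hlc
    have hl : 0 < l := by linarith
    have hlC : 1 ≤ c * l ^ (n + 3) := by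
      calc 1 = c * (1 / c) := by field_simp
        _ ≤ c * l := by gcongr
        _ ≤ c * l ^ (n + 3) := by gcongr; exact le_self_pow₀ hl1 (by omega)
    refine Set.not_infinite.2 ((hfin.union (Set.finite_singleton 0)).subset fun y hy => ?_)
    by_cases hy0 : y = 0
    · exact Or.inr hy0
    left
    have hn := hpos y hy0
    have h1 : l ^ (n + 3) * ∏ i, |A (fun j => (y j : ℝ)) i| ≤ w ‖A (fun j => (y j : ℝ))‖ :=
      le_trans hy (hw_anti hn (mul_pos hl hn) (le_mul_of_one_le_left hn.le hl1))
    calc ∏ i, |A (fun j => (y j : ℝ)) i| ≤ c * l ^ (n + 3) * ∏ i, |A (fun j => (y j : ℝ)) i| :=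
          le_mul_of_one_le_left (hprod y) hlC
      _ = c * (l ^ (n + 3) * ∏ i, |A (fun j => (y j : ℝ)) i|) := by ring
      _ ≤ c * w ‖A (fun j => (y j : ℝ))‖ := by gcongr
  obtain ⟨N, hN1, hN2⟩ : ∃ N : ℕ, P (l₀ * (1 + δ) ^ N) ∧ ¬ P (l₀ * (1 + δ) ^ (N + 1)) := by
    refine exists_and_not_succ (P := fun N => P (l₀ * (1 + δ) ^ N)) (by simpa using hPl₀) ?_
    have h := (tendsto_pow_atTop_atTop_of_one_lt (by linarith : 1 < 1 + δ)).const_mul_atTop hl₀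
    obtain ⟨N, hN⟩ := (h.eventually_ge_atTop (max 1 (1 / c))).exists
    exact ⟨N, hlarge _ ((le_max_left _ _).trans hN) ((le_max_right _ _).trans hN)⟩
  set l := l₀ * (1 + δ) ^ N with hl_def
  have hl : 0 < l := by positivity
  refine ⟨l, hl, hN1, ?_⟩
  rw [pow_succ, ← mul_assoc, ← hl_def] at hN2
  obtain ⟨ν, hν⟩ := pow_unbounded_of_one_lt (1 / l) one_lt_two
  refine ((Set.not_infinite.1 hN2).union
    (Finset.finite_toSet (Fintype.piFinset fun _ : Fin (n + 3) => dyadicRange ν))).subset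
    fun y hy => ?_
  set T := l * ‖A (fun j => (y j : ℝ))‖ with hT
  replace hy : l ^ (n + 3) * ∏ i, |A (fun j => (y j : ℝ)) i| ≤ (1 - ε) * w T := hy
  by_cases hT1 : 1 ≤ T
  · left
    show (l * (1 + δ)) ^ (n + 3) * ∏ i, |A (fun j => (y j : ℝ)) i|
      ≤ w (l * (1 + δ) * ‖A (fun j => (y j : ℝ))‖)
    have hw' := hw_pos ((1 + δ) * T) (by positivity)
    have h1ε : 0 ≤ 1 - ε := by linarith
    rw [show l * (1 + δ) * ‖A (fun j => (y j : ℝ))‖ = (1 + δ) * T by rw [hT]; ring, mul_pow]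
    calc l ^ (n + 3) * (1 + δ) ^ (n + 3) * ∏ i, |A (fun j => (y j : ℝ)) i|
        = (1 + δ) ^ (n + 3) * (l ^ (n + 3) * ∏ i, |A (fun j => (y j : ℝ)) i|) := by ring
      _ ≤ (1 + δ) ^ (n + 3) * ((1 - ε) * ((1 + ε) * w ((1 + δ) * T))) := by
          refine mul_le_mul_of_nonneg_left (hy.trans ?_) (by positivity)
          exact mul_le_mul_of_nonneg_left (hδw T hT1) h1ε
      _ = (1 + δ) ^ (n + 3) * ((1 - ε) * (1 + ε)) * w ((1 + δ) * T) := by ring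
      _ ≤ 1 * w ((1 + δ) * T) := by gcongr
      _ = _ := one_mul _
  · right
    refine Finset.mem_coe.2 (mem_piFinset_of_norm_le ?_)
    have h1 : ‖A (fun j => (y j : ℝ))‖ ≤ 1 / l := by
      rw [le_div_iff₀ hl, mul_comm]; exact (not_le.1 hT1).le
    have h2 : (0 : ℝ) < 2 ^ ν := by positivity
    linarith [hdom fun j => (y j : ℝ)]

/-! ### The theorem -/

/-- **Theorem 2.** Let `d ≥ 3` and let `w : (0,∞) → (0,∞)` decrease to zero at
infinity, satisfy `lim_{δ→0⁺} sup_{t≥1} w(t)/w((1+δ)t) = 1`, and suppose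
`∑ ν^(d-1) w(2^ν) < ∞`. Then for every `ε > 0` there is a full-rank lattice `Λ ⊂ ℝ^d` such that
`Π^d(x) ≤ (1+ε) w(|x|)` for infinitely many `x ∈ Λ`, while `Π^d(x) ≤ (1-ε) w(|x|)` only for
finitely many `x ∈ Λ`. Here `Π^d(x) = ∏ i |x i|` and `|x| = ‖x‖` is the sup-norm. -/
theorem exists_lattice_exact_order (d : ℕ) (hd : 3 ≤ d) (w : ℝ → ℝ)
    (hw_pos : ∀ t, 0 < t → 0 < w t)
    (hw_anti : AntitoneOn w (Set.Ioi 0))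
    (hw_lim : Tendsto w atTop (nhds 0))
    (hw_reg : Tendsto (fun δ : ℝ => sSup {r : ℝ | ∃ t : ℝ, 1 ≤ t ∧ r = w t / w ((1 + δ) * t)})
      (nhdsWithin 0 (Set.Ioi 0)) (nhds 1))
    (hw_sum : Summable fun ν : ℕ => (ν : ℝ) ^ (d - 1) * w (2 ^ ν))
    (ε : ℝ) (hε : 0 < ε) :
    ∃ Λ : Set (Fin d → ℝ), IsFullLattice Λ ∧
      {x : Fin d → ℝ | x ∈ Λ ∧ (∏ i, |x i|) ≤ (1 + ε) * w ‖x‖}.Infinite ∧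
      {x : Fin d → ℝ | x ∈ Λ ∧ (∏ i, |x i|) ≤ (1 - ε) * w ‖x‖}.Finite := by
  obtain ⟨n, rfl⟩ : ∃ n, d = n + 3 := ⟨d - 3, by omega⟩
  obtain ⟨A, hdom, ⟨c, hc, hfin⟩, C, hC, hinf⟩ := exists_lattice_order hw_pos hw_anti hw_reg hw_sum
  obtain ⟨l, hl, hl1, hl2⟩ := exists_scaled_lattice hw_pos hw_anti hw_reg A hdom hc hfin hC hinf
    (ε := min ε (1 / 2)) (by positivity) ((min_le_right _ _).trans_lt (by norm_num))
  have hinj : Function.Injective (l • A) := by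
    refine (injective_iff_map_eq_zero _).2 fun y hy => ?_
    rw [LinearMap.smul_apply, smul_eq_zero] at hy
    have h := hdom y
    rw [hy.resolve_left hl.ne', norm_zero] at h
    exact norm_le_zero_iff.1 h
  have hprod : ∀ y, ∏ i, |(l • A) y i| = l ^ (n + 3) * ∏ i, |A y i| := by
    intro y
    simp only [LinearMap.smul_apply, Pi.smul_apply, smul_eq_mul, abs_mul, abs_of_pos hl]
    rw [Finset.prod_mul_distrib, Finset.prod_const, Finset.card_univ, Fintype.card_fin]
  have hnorm : ∀ y, ‖(l • A) y‖ = l * ‖A y‖ := by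
    intro y
    rw [LinearMap.smul_apply, norm_smul, Real.norm_eq_abs, abs_of_pos hl]
  refine ⟨_, isFullLattice_range (l • A) hinj, ?_, ?_⟩
  · have hcast : Function.Injective fun y : Fin (n + 3) → ℤ => (l • A) fun j => (y j : ℝ) :=
      fun y y' h => funext fun j => by simpa using congrFun (hinj h) j
    refine ((hl1.sdiff (Set.finite_singleton 0)).image hcast.injOn).mono ?_
    rintro _ ⟨y, ⟨hy, hy0⟩, rfl⟩
    refine ⟨⟨y, rfl⟩, ?_⟩
    simp only [hprod, hnorm]
    refine le_trans hy ?_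
    have hn : 0 < ‖A fun j => (y j : ℝ)‖ := by
      refine lt_of_lt_of_le ?_ (hdom _)
      rw [norm_pos_iff]
      intro h
      exact hy0 (funext fun j => by simpa using congrFun h j)
    have := hw_pos _ (mul_pos hl hn)
    nlinarith
  · -- At `x = 0` nothing is known about `w ‖x‖`, so this point is added separately.
    refine ((hl2.image fun y => (l • A) fun j => (y j : ℝ)).union
      (Set.finite_singleton 0)).subset ?_
    rintro _ ⟨⟨y, rfl⟩, hy⟩
    by_cases hx : (l • A) (fun j => (y j : ℝ)) = 0
    · exact Or.inr hx
    · refine Or.inl ⟨y, ?_, rfl⟩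
      have hw' := hw_pos _ (norm_pos_iff.2 hx)
      simp only [Set.mem_ofPred_eq]
      rw [← hprod, ← hnorm]
      refine hy.trans ?_
      gcongr
      exact min_le_left _ _
end
end

section
/- Let w : (0,∞) → (0,∞) be a function decreasing to zero as t → +∞ satisfying lim_{δ→0⁺} sup_{t≥1} w(t)/w((1+δ)t) = 1. Then for every real k > 0 one has 0 < sup_{t≥1} w(kt)/w(t) < +∞. -/
/-!
The regularity hypothesis is used at a single `δ > 0`. Since a supremum of an unbounded set of reals
is `0` in Lean, whereas the suprema tend to `1`, for some `δ > 0` the ratios `w t / w ((1 + δ) t)`,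
`t ≥ 1`, are bounded by a constant `C`. Iterating (`le_pow_mul_of_le_mul`) gives
`w s ≤ C ^ n * w ((1 + δ) ^ n * s)` for `s ≥ 1`. With `n` so large that `(1 + δ) ^ n * k ≥ 1`,
monotonicity yields `w (k t) ≤ C ^ n * w t` whenever `k t ≥ 1`. On the remaining range
`1 ≤ t ≤ 1 / k` the ratio is at most `w k / w (1 / k)`. Positivity of the supremum is clear, as
every ratio is positive.
-/

open Filter Set

noncomputable section

theorem le_pow_mul_of_le_mul {w : ℝ → ℝ} {C q : ℝ} (hC : 0 ≤ C) (hq : 1 ≤ q)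
    (h : ∀ t, 1 ≤ t → w t ≤ C * w (q * t)) (n : ℕ) {s : ℝ} (hs : 1 ≤ s) :
    w s ≤ C ^ n * w (q ^ n * s) := by
  induction n with
  | zero => simp
  | succ n ih =>
    have h1 : 1 ≤ q ^ n * s := one_le_mul_of_one_le_of_one_le (one_le_pow₀ hq) hs
    calc w s ≤ C ^ n * w (q ^ n * s) := ih
      _ ≤ C ^ n * (C * w (q * (q ^ n * s))) := by
        gcongr
        exact h _ h1
      _ = C ^ (n + 1) * w (q ^ (n + 1) * s) := by
        rw [show q * (q ^ n * s) = q ^ (n + 1) * s by ring]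
        ring

/-- Let `w : (0,∞) → (0,∞)` decrease to zero at infinity and satisfy
`lim_{δ→0⁺} sup_{t≥1} w(t)/w((1+δ)t) = 1`. Then for every real `k > 0` the set
`{w(kt)/w(t) : t ≥ 1}` is bounded above and `0 < sup_{t≥1} w(kt)/w(t) < +∞`. -/
theorem sup_ratio_pos_and_bdd (w : ℝ → ℝ)
    (hw_pos : ∀ t, 0 < t → 0 < w t)
    (hw_anti : AntitoneOn w (Set.Ioi 0))
    (hw_lim : Tendsto w atTop (nhds 0))
    (hw_reg : Tendsto (fun δ : ℝ => sSup {r : ℝ | ∃ t : ℝ, 1 ≤ t ∧ r = w t / w ((1 + δ) * t)})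
      (nhdsWithin 0 (Set.Ioi 0)) (nhds 1))
    (k : ℝ) (hk : 0 < k) :
    BddAbove {r : ℝ | ∃ t : ℝ, 1 ≤ t ∧ r = w (k * t) / w t} ∧
      0 < sSup {r : ℝ | ∃ t : ℝ, 1 ≤ t ∧ r = w (k * t) / w t} := by
  have hbdd : BddAbove {r : ℝ | ∃ t : ℝ, 1 ≤ t ∧ r = w (k * t) / w t} := by
    obtain ⟨δ, hδ_sup, hδ⟩ :=
      ((hw_reg.eventually (lt_mem_nhds zero_lt_one)).and self_mem_nhdsWithin).exists
    have hδ : 0 < δ := hδ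
    -- An unbounded set would have the junk supremum `0`.
    have hbd : BddAbove {r : ℝ | ∃ t : ℝ, 1 ≤ t ∧ r = w t / w ((1 + δ) * t)} := by
      by_contra hn
      rw [Real.sSup_of_not_bddAbove hn] at hδ_sup
      exact lt_irrefl _ hδ_sup
    obtain ⟨C, hC⟩ := hbd
    have hstep : ∀ t, 1 ≤ t → w t ≤ C * w ((1 + δ) * t) := fun t ht =>
      (div_le_iff₀ (hw_pos _ (by positivity))).1 (hC ⟨t, ht, rfl⟩)
    have hC0 : 0 ≤ C :=
      (div_pos (hw_pos 1 one_pos) (hw_pos ((1 + δ) * 1) (by positivity))).le.trans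
        (hC ⟨1, le_rfl, rfl⟩)
    obtain ⟨n, hn⟩ := pow_unbounded_of_one_lt (1 / k) (show 1 < 1 + δ by linarith)
    refine ⟨max (C ^ n) (w k / w (1 / k)), ?_⟩
    rintro r ⟨t, ht, rfl⟩
    have ht0 : 0 < t := by linarith
    have hkt : 0 < k * t := by positivity
    rcases le_total 1 (k * t) with h | h
    · refine le_max_of_le_left ((div_le_iff₀ (hw_pos t ht0)).2 ?_)
      refine (le_pow_mul_of_le_mul hC0 (by linarith) hstep n h).trans ?_
      have hle : t ≤ (1 + δ) ^ n * (k * t) := by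
        have h1 : 1 ≤ (1 + δ) ^ n * k := (div_le_iff₀ hk).1 hn.le
        rw [← mul_assoc]
        exact le_mul_of_one_le_left ht0.le h1
      gcongr
      exact hw_anti ht0 (ht0.trans_le hle) hle
    · refine le_max_of_le_right ?_
      have h1 : w (k * t) ≤ w k := hw_anti hk hkt (le_mul_of_one_le_right hk.le ht)
      have hk' : 0 < 1 / k := by positivity
      have h2 : w (1 / k) ≤ w t :=
        hw_anti ht0 hk' ((le_div_iff₀ hk).2 (by rwa [mul_comm]))
      exact div_le_div₀ (hw_pos k hk).le h1 (hw_pos _ hk') h2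
  refine ⟨hbdd, ?_⟩
  exact (div_pos (hw_pos (k * 1) (by positivity)) (hw_pos 1 one_pos)).trans_le
    (le_csSup hbdd ⟨1, le_rfl, rfl⟩)
end
end

section
/- Let d ≥ 3 and let 𝔏 ⊂ ℝ^d be a two-dimensional linear subspace such that 𝔏 ∩ {x : x_i = 0} ∩ {x : x_j = 0} = {0} for all pairs i ≠ j. Then there exists a constant C = C(𝔏) > 0 such that every x = (x_1,…,x_d) ∈ 𝔏 with ∏_{j=1}^d |x_j| ≤ 1 and X := max_j |x_j| ≥ C admits an index j* ∈ {1,…,d} with |x_{j*}| ≤ C · X^{-(d-1)} and |x_j| ≥ C^{-1} X for all j ≠ j*. -/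
/-!
For `i ≠ j` the map `x ↦ (x i, x j)` is injective on `L`, hence, `L` being finite-dimensional,
bounded below: `‖x‖ ≤ K * max |x i| |x j|` for all `x ∈ L` (`exists_bound_pair`). There are
finitely many pairs, so one `K ≥ 1` serves them all. Let `jstar` minimise `|x j|`. For `j ≠ jstar`
the maximum of `|x j|` and `|x jstar|` is `|x j|`, so `‖x‖ / K ≤ |x j|`. Multiplying these `d - 1`
lower bounds in `∏ j, |x j| ≤ 1` gives `|x jstar| ≤ K ^ (d - 1) * ‖x‖ ^ (-(d - 1))`, and
`C = K ^ d` works for both conclusions.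
-/

open Filter Set

noncomputable section

/-- Two coordinates that vanish together on `L` only at `0` control the norm on `L`. -/
theorem exists_bound_pair {d : ℕ} (L : Submodule ℝ (Fin d → ℝ)) (i j : Fin d)
    (h : ∀ x ∈ L, x i = 0 → x j = 0 → x = 0) :
    ∃ K : ℝ, 0 < K ∧ ∀ x ∈ L, ‖x‖ ≤ K * max |x i| |x j| := by
  let f : L →ₗ[ℝ] ℝ × ℝ :=
    ((LinearMap.proj i).prod (LinearMap.proj j)).comp L.subtype
  have hf : LinearMap.ker f = ⊥ := by
    rw [LinearMap.ker_eq_bot']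
    rintro ⟨x, hx⟩ hfx
    have h1 : x i = 0 := congrArg Prod.fst hfx
    have h2 : x j = 0 := congrArg Prod.snd hfx
    exact Subtype.ext (h x hx h1 h2)
  obtain ⟨K, hK, hKf⟩ := f.exists_antilipschitzWith hf
  refine ⟨K, by exact_mod_cast hK, fun x hx => ?_⟩
  have := hKf.le_mul_dist ⟨x, hx⟩ 0
  rw [map_zero, dist_zero_right, dist_zero_right] at this
  exact this

/-- **Lemma 1.** Let `d ≥ 3` and let `𝔏 ⊂ ℝ^d` be a two-dimensional subspace
meeting every pair of distinct coordinate hyperplanes only in `0`. Then there is `C > 0` such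
that every `x ∈ 𝔏` with `∏ j |x j| ≤ 1` and `X := ‖x‖ ≥ C` (sup-norm) admits an index `j*`
with `|x j*| ≤ C·X^{-(d-1)}` and `|x j| ≥ C⁻¹·X` for all `j ≠ j*`. -/
theorem exists_small_coordinate (d : ℕ) (hd : 3 ≤ d)
    (L : Submodule ℝ (Fin d → ℝ)) (hdim : Module.finrank ℝ L = 2)
    (htrans : ∀ i j : Fin d, i ≠ j → ∀ x ∈ L, x i = 0 → x j = 0 → x = 0) :
    ∃ C : ℝ, 0 < C ∧ ∀ x ∈ L, (∏ j, |x j|) ≤ 1 → C ≤ ‖x‖ →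
      ∃ jstar : Fin d, |x jstar| ≤ C * ‖x‖ ^ (-((d : ℝ) - 1)) ∧
        ∀ j : Fin d, j ≠ jstar → C⁻¹ * ‖x‖ ≤ |x j| := by
  classical
  have hpair : ∀ p : Fin d × Fin d, ∃ K : ℝ, 0 < K ∧
      (p.1 ≠ p.2 → ∀ x ∈ L, ‖x‖ ≤ K * max |x p.1| |x p.2|) := by
    intro p
    by_cases hp : p.1 = p.2
    · exact ⟨1, one_pos, fun h => absurd hp h⟩
    · obtain ⟨K, hK, h⟩ := exists_bound_pair L p.1 p.2 (htrans _ _ hp)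
      exact ⟨K, hK, fun _ => h⟩
  choose k hk0 hk using hpair
  obtain ⟨K, hK1, hK⟩ : ∃ K : ℝ, 1 ≤ K ∧ ∀ p, k p ≤ K := by
    refine ⟨1 + ∑ p, k p, ?_, fun p => ?_⟩
    · have := Finset.sum_nonneg (fun p (_ : p ∈ Finset.univ) => (hk0 p).le)
      linarith
    · have := Finset.single_le_sum (fun p _ => (hk0 p).le) (Finset.mem_univ p)
      linarith
  have hK0 : 0 < K := by linarith
  have hKd : K ≤ K ^ d := le_self_pow₀ hK1 (by omega)
  refine ⟨K ^ d, by positivity, fun x hx hprod hX => ?_⟩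
  have hX0 : 0 < ‖x‖ := lt_of_lt_of_le (by positivity) hX
  have : Nonempty (Fin d) := ⟨⟨0, by omega⟩⟩
  obtain ⟨s, hs⟩ := Finite.exists_min fun j => |x j|
  have hlow : ∀ j, j ≠ s → ‖x‖ / K ≤ |x j| := by
    intro j hj
    have h1 := hk (j, s) hj x hx
    rw [max_eq_left (hs j)] at h1
    rw [div_le_iff₀' hK0]
    exact h1.trans (mul_le_mul_of_nonneg_right (hK _) (abs_nonneg _))
  refine ⟨s, ?_, fun j hj => le_trans ?_ (hlow j hj)⟩
  · have hcard : (Finset.univ.erase s).card = d - 1 := by simp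
    have h1 : (‖x‖ / K) ^ (d - 1) ≤ ∏ j ∈ Finset.univ.erase s, |x j| := by
      rw [← hcard, ← Finset.prod_const]
      exact Finset.prod_le_prod (fun _ _ => by positivity)
        (fun j hj => hlow j (Finset.ne_of_mem_erase hj))
    have h2 : |x s| * (‖x‖ / K) ^ (d - 1) ≤ 1 := by
      refine le_trans (mul_le_mul_of_nonneg_left h1 (abs_nonneg _)) ?_
      rwa [Finset.mul_prod_erase _ (fun j => |x j|) (Finset.mem_univ s)]
    have hexp : ‖x‖ ^ (-((d : ℝ) - 1)) = (‖x‖ ^ (d - 1))⁻¹ := by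
      rw [Real.rpow_neg hX0.le, ← Real.rpow_natCast, Nat.cast_sub (by omega), Nat.cast_one]
    rw [hexp, ← div_eq_mul_inv, le_div_iff₀ (by positivity)]
    rw [div_pow, mul_div_assoc', div_le_one (by positivity)] at h2
    exact h2.trans (pow_le_pow_right₀ hK1 (by omega))
  · rw [div_eq_inv_mul]
    gcongr
end
end

section
/- Let d ≥ 3, let α ∈ (0,1/2] and let ξ_2,…,ξ_d be real numbers with ξ_j α ≠ 1 for all j = 2,…,d. Let ψ : [0,∞) → (0,∞) be decreasing to zero and suppose the series ∑_{n=1}^∞ ψ(n) converges. Then there is a set 𝓑 ⊂ [0,1/2] of full Lebesgue measure such that for every β ∈ 𝓑 there exists c = c(β) > 0 with |(m + nβ) − ξ_j (mα + n)| > c ψ(|n|) for all (m,n) ∈ ℤ² \ {(0,0)} and all j = 2,…,d. -/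
open MeasureTheory Filter Set

noncomputable section

/-!
Write `δ = 1 - ξ_j α ≠ 0`, so that the form in question is `m δ + n (β - ξ_j)`. Its absolute value
is at least the norm of `n • (β - ξ_j)` in the circle `ℝ / δℤ`, uniformly in `m`. Multiplication by
`n ≠ 0` preserves Haar measure on the circle, so the points `y` with `‖n • y‖ ≤ ψ(|n|)` form a set
of measure at most `2 ψ(|n|)`, and Borel–Cantelli leaves only finitely many exceptional `n` for
almost every `y`. For almost every `y` none of the remaining norms `‖n • y‖` vanishes, so a small
enough `c` takes care of these `n` too (`ae_circle`). The statement is then pulled back along the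
covering map `ℝ → ℝ / δℤ` (`ae_real`) and translated by `ξ_j`; the terms with `n = 0` only require
`c ψ(0) < |δ|`. Finitely many `j` are handled by taking the smallest constant.
-/

/-- All sufficiently small positive `c` work: this form, unlike the bare existence of `c`, is
stable under finite conjunctions. -/
lemma eventually_mul_lt (a : ℝ) {b : ℝ} (hb : 0 < b) :
    ∀ᶠ c in nhdsWithin (0 : ℝ) (Ioi 0), c * a < b := by
  have h : Tendsto (fun c : ℝ => c * a) (nhds 0) (nhds (0 * a)) :=
    (continuous_id.mul continuous_const).tendsto 0
  rw [zero_mul] at h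
  exact nhdsWithin_le_nhds (h.eventually (gt_mem_nhds hb))

lemma measure_norm_zsmul_le (p : ℝ) [Fact (0 < p)] {n : ℤ} (hn : n ≠ 0) (ε : ℝ) :
    volume {y : AddCircle p | ‖n • y‖ ≤ ε} ≤ ENNReal.ofReal (2 * ε) := by
  have hmp := Measure.measurePreserving_zsmul (volume : Measure (AddCircle p)) hn
  have hset : {y : AddCircle p | ‖n • y‖ ≤ ε}
      = (fun y : AddCircle p => n • y) ⁻¹' Metric.closedBall 0 ε := by
    ext y; simp
  rw [hset, hmp.measure_preimage Metric.isClosed_closedBall.measurableSet.nullMeasurableSet,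
    AddCircle.volume_closedBall]
  exact ENNReal.ofReal_le_ofReal (min_le_right _ _)

/-- The convergence half of a Khinchin-type theorem on the circle, in the strengthened form that
also covers the finitely many `n` left over by Borel–Cantelli. -/
lemma ae_circle (p : ℝ) [Fact (0 < p)] (φ : ℤ → ℝ) (hpos : ∀ n, 0 < φ n) (hsum : Summable φ) :
    ∀ᵐ y : AddCircle p, ∀ᶠ c in nhdsWithin (0 : ℝ) (Ioi 0),
      ∀ n : ℤ, n ≠ 0 → c * φ n < ‖n • y‖ := by
  have hfin : ∀ᵐ y : AddCircle p, {n : ℤ | n ≠ 0 ∧ ‖n • y‖ ≤ φ n}.Finite := by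
    refine ae_finite_setOfPred_mem (μ := (volume : Measure (AddCircle p)))
      (s := fun n : ℤ => {y : AddCircle p | n ≠ 0 ∧ ‖n • y‖ ≤ φ n}) ?_
    refine ne_top_of_le_ne_top (hsum.mul_left 2).tsum_ofReal_ne_top
      (ENNReal.tsum_le_tsum fun n => ?_)
    by_cases hn : n = 0
    · simp [hn]
    · exact (measure_mono fun y hy => hy.2).trans (measure_norm_zsmul_le p hn (φ n))
  have hne : ∀ᵐ y : AddCircle p, ∀ n : ℤ, n ≠ 0 → 0 < ‖n • y‖ := by
    rw [ae_all_iff]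
    intro n
    by_cases hn : n = 0
    · simp [hn]
    -- Radius `0`: the kernel of multiplication by `n` is a null set.
    · have h0 := measure_norm_zsmul_le p hn 0
      rw [mul_zero, ENNReal.ofReal_zero, nonpos_iff_eq_zero] at h0
      rw [ae_iff]
      refine measure_mono_null (fun y hy => ?_) h0
      exact not_lt.mp fun hlt => hy fun _ => hlt
  filter_upwards [hfin, hne] with y hy hy0
  have hexc : ∀ᶠ c in nhdsWithin (0 : ℝ) (Ioi 0),
      ∀ n ∈ {n : ℤ | n ≠ 0 ∧ ‖n • y‖ ≤ φ n}, c * φ n < ‖n • y‖ :=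
    (eventually_all_finite hy).2 fun n hn => eventually_mul_lt _ (hy0 n hn.1)
  filter_upwards [hexc, eventually_mul_lt 1 one_pos] with c hc hc1 n hn
  by_cases hle : ‖n • y‖ ≤ φ n
  · exact hc n ⟨hn, hle⟩
  · have := hpos n
    push Not at hle
    nlinarith

/-- The covering map is measure preserving only on each interval of length `p`; countably many of
these cover the line. -/
lemma ae_real (p : ℝ) [hp : Fact (0 < p)] (P : AddCircle p → Prop) (h : ∀ᵐ y, P y) :
    ∀ᵐ t : ℝ, P (t : AddCircle p) := by
  rw [← Measure.restrict_univ (μ := (volume : Measure ℝ)),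
    ← iUnion_Ioc_add_zsmul hp.out (0 : ℝ), ae_restrict_iUnion_iff]
  intro k
  have hmp := AddCircle.measurePreserving_mk p (0 + k • p)
  rw [add_smul, one_smul, ← add_assoc]
  exact hmp.quasiMeasurePreserving.ae h

/-- Almost every `β` is good for a single slope `x`, for all sufficiently small constants. -/
lemma ae_single (α x : ℝ) (hx : x * α ≠ 1) (ψ : ℝ → ℝ) (hpos : ∀ t, 0 ≤ t → 0 < ψ t)
    (hsum : Summable fun n : ℕ => ψ n) :
    ∀ᵐ β : ℝ, ∀ᶠ c in nhdsWithin (0 : ℝ) (Ioi 0), ∀ m n : ℤ, (m, n) ≠ (0, 0) →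
      c * ψ |(n : ℝ)| < |((m : ℝ) + (n : ℝ) * β) - x * ((m : ℝ) * α + (n : ℝ))| := by
  set δ : ℝ := 1 - x * α with hδ
  have hδ0 : 0 < |δ| := abs_pos.2 (sub_ne_zero.2 hx.symm)
  have : Fact (0 < |δ|) := ⟨hδ0⟩
  have hs : Summable fun n : ℤ => ψ |(n : ℝ)| := by
    refine Summable.of_nat_of_neg ?_ ?_ <;> simpa using hsum
  have hR := ae_real |δ| _ (ae_circle |δ| (fun n : ℤ => ψ |(n : ℝ)|)
    (fun n => hpos _ (abs_nonneg _)) hs)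
  have hT := (measurePreserving_sub_right (volume : Measure ℝ) x).quasiMeasurePreserving.ae hR
  -- The circle needs a positive period, hence `|δ|`; `δ` itself is still a period.
  have hcoe : ((δ : ℝ) : AddCircle |δ|) = 0 := by
    rw [AddCircle.coe_eq_zero_iff]
    rcases abs_choice δ with h | h
    · exact ⟨1, by simp [h]⟩
    · exact ⟨-1, by simp [h]⟩
  filter_upwards [hT] with β hβ
  filter_upwards [hβ, eventually_mul_lt (ψ 0) hδ0, self_mem_nhdsWithin] with c hc hc0 hcpos m n hmn
  have hform : ((m : ℝ) + (n : ℝ) * β) - x * ((m : ℝ) * α + (n : ℝ))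
      = m • δ + n • (β - x) := by
    simp only [zsmul_eq_mul, hδ]; ring
  rw [hform]
  by_cases hn : n = 0
  · subst hn
    have hm : m ≠ 0 := fun h => hmn (by rw [h])
    have h1 : (1 : ℝ) ≤ |(m : ℝ)| := by exact_mod_cast Int.one_le_abs hm
    have h2 : |δ| ≤ |(m : ℝ)| * |δ| := le_mul_of_one_le_left hδ0.le h1
    simpa [abs_mul] using hc0.trans_le h2
  · refine (hc n hn).trans_le ?_
    have hq : n • ((β - x : ℝ) : AddCircle |δ|)
        = ((m • δ + n • (β - x) : ℝ) : AddCircle |δ|) := by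
      rw [AddCircle.coe_add, AddCircle.coe_zsmul, AddCircle.coe_zsmul, hcoe, smul_zero, zero_add]
    rw [hq]
    exact QuotientAddGroup.norm_mk_le_norm

/-- **Lemma 2.** Let `d ≥ 3`, `α ∈ (0, 1/2]` and `ξ_2, …, ξ_d` reals with
`ξ_j α ≠ 1`. Let `ψ : [0,∞) → (0,∞)` decrease to zero with `∑ ψ(n) < ∞`. Then there is a set
`𝓑 ⊂ [0, 1/2]` of full Lebesgue measure such that for every `β ∈ 𝓑` there is `c > 0` with
`|(m + nβ) − ξ_j (mα + n)| > c·ψ(|n|)` for all `(m, n) ∈ ℤ² \ {0}` and all `j = 2, …, d`. -/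
theorem full_measure_good_beta (d : ℕ) (hd : 3 ≤ d)
    (α : ℝ) (hα0 : 0 < α) (hα2 : α ≤ 1 / 2)
    (ξ : ℕ → ℝ) (hξ : ∀ j : ℕ, 2 ≤ j → j ≤ d → ξ j * α ≠ 1)
    (ψ : ℝ → ℝ) (hψ_pos : ∀ t, 0 ≤ t → 0 < ψ t)
    (hψ_anti : AntitoneOn ψ (Set.Ici 0))
    (hψ_lim : Tendsto ψ atTop (nhds 0))
    (hψ_sum : Summable fun n : ℕ => ψ n) :
    ∃ B : Set ℝ, B ⊆ Set.Icc 0 (1 / 2) ∧ volume (Set.Icc (0 : ℝ) (1 / 2) \ B) = 0 ∧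
      ∀ β ∈ B, ∃ c : ℝ, 0 < c ∧ ∀ m n : ℤ, (m, n) ≠ (0, 0) →
        ∀ j : ℕ, 2 ≤ j → j ≤ d →
          c * ψ |(n : ℝ)| < |((m : ℝ) + (n : ℝ) * β) - ξ j * ((m : ℝ) * α + (n : ℝ))| := by
  have hall : ∀ᵐ β : ℝ, ∀ j : ℕ, j ∈ Finset.Icc 2 d →
      ∀ᶠ c in nhdsWithin (0 : ℝ) (Ioi 0), ∀ m n : ℤ, (m, n) ≠ (0, 0) →
        c * ψ |(n : ℝ)| < |((m : ℝ) + (n : ℝ) * β) - ξ j * ((m : ℝ) * α + (n : ℝ))| := by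
    rw [ae_all_iff]
    intro j
    by_cases hj : j ∈ Finset.Icc 2 d
    · have hj' := Finset.mem_Icc.1 hj
      filter_upwards [ae_single α (ξ j) (hξ j hj'.1 hj'.2) ψ hψ_pos hψ_sum] with β hβ _
      exact hβ
    · exact Eventually.of_forall fun β h => absurd h hj
  refine ⟨Icc 0 (1 / 2) ∩ {β | ∀ j : ℕ, j ∈ Finset.Icc 2 d →
      ∀ᶠ c in nhdsWithin (0 : ℝ) (Ioi 0), ∀ m n : ℤ, (m, n) ≠ (0, 0) →
        c * ψ |(n : ℝ)| < |((m : ℝ) + (n : ℝ) * β) - ξ j * ((m : ℝ) * α + (n : ℝ))|},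
    inter_subset_left, ?_, ?_⟩
  · exact measure_mono_null (fun β hβ hgood => hβ.2 ⟨hβ.1, hgood⟩) (ae_iff.1 hall)
  · rintro β ⟨-, hβ⟩
    have hc := (Filter.eventually_all_finset (Finset.Icc 2 d)).2 hβ
    obtain ⟨c, hc, hcpos⟩ := (hc.and self_mem_nhdsWithin).exists
    exact ⟨c, hcpos, fun m n hmn j h2 hd => hc j (Finset.mem_Icc.2 ⟨h2, hd⟩) m n hmn⟩
end
end

section
/- Let d ≥ 3 and let 𝔏 ⊂ ℝ^d be a two-dimensional subspace with 𝔏 ∩ {x_i = 0} ∩ {x_j = 0} = {0} for all i ≠ j. Let e_1, e_2 be unit vectors in 𝔏 with e_2 spanning 𝔩_1 = 𝔏 ∩ {x_1 = 0}, e_1 ⊥ e_2, and first coordinate e_{1,1} > 0; define ξ_2,…,ξ_d ∈ ℝ by 𝔏 ∩ {x_j = 0} = {z_1 e_1 + z_2 e_2 : z_2 = ξ_j z_1}. Let α, β be irrational numbers with ξ_j α ≠ 1 for all j, αβ ≠ 1, and β ≠ ξ_j for all j. Let ψ : (0,∞) → (0,∞) be decreasing to zero, and assume there exists c > 0 such that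 |(m + nβ) − ξ_j (mα + n)| > c ψ(|n|) for all (m,n) ∈ ℤ² \ {(0,0)} and all j = 2,…,d. Then there exist constants C > 0 and H > 0 such that for every (m,n) ∈ ℤ² \ {(0,0)} which is NOT of the form (m,n) = s(q_ν, −p_ν) for a convergent p_ν/q_ν of the continued fraction of α and a nonzero integer s, the point x = (mα + n) e_1 + (m + nβ) e_2 satisfies ∏_{j=1}^d |x_j| ≥ C · min(1, ψ(H·X) · X^{d−1}), where X = max_j |x_j|. -/
/-!
Write `X` for the sup norm of the point `x` attached to `(m, n)`. Since `αβ ≠ 1`, the map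
`(m, n) ↦ x` is linear and injective on `ℝ²`, so `max |m| |n| ≤ K X` for some constant `K`; in
particular `X` is bounded below. By transversality two different coordinates of a point of `L`
cannot both be small compared with `X`, so the product of all coordinates is at least
`|x j| (δ X) ^ (d - 1)`, where `x j` is the smallest coordinate (`smallest_mul_pow_le_prod`).
It remains to bound `|x j|` from below (`coordinate_bound`).

* For the first coordinate, `x j` is a multiple of `mα + n`. When `(m, n)` does not come from a
  convergent, Legendre's theorem gives `|m| |mα + n| ≥ 1/2` (`legendre_bound`), hence
  `|x j| ≫ 1 / X`, and the product is `≫ X ^ (d - 2) ≫ 1`.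
* For any other coordinate, `x j = e₂ j ((m + nβ) - ξ_j (mα + n))`, so the hypothesis gives
  `|x j| ≫ ψ |n| ≥ ψ (K X)` if `n ≠ 0`. If `n = 0`, then `|x j| ≫ |m| ≥ 1`.
-/

open Filter Set

noncomputable section

/-- The continuants of a real number are integers. -/
lemma exists_int_contsAux (α : ℝ) (k : ℕ) :
    (∃ a b : ℤ, (GenContFract.of α).contsAux k = ⟨(a : ℝ), (b : ℝ)⟩) ∧
      ∃ a b : ℤ, (GenContFract.of α).contsAux (k + 1) = ⟨(a : ℝ), (b : ℝ)⟩ := by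
  induction k with
  | zero =>
    exact ⟨⟨1, 0, by simp [GenContFract.contsAux]⟩, ⌊α⌋, 1, by simp [GenContFract.contsAux]⟩
  | succ k ih =>
    obtain ⟨⟨a, b, h₁⟩, a', b', h₂⟩ := ih
    refine ⟨⟨a', b', h₂⟩, ?_⟩
    rcases hs : (GenContFract.of α).s.get? k with _ | gp
    · exact ⟨a', b', by
        rw [← h₂]; exact GenContFract.contsAux_stable_step_of_terminated hs⟩
    · obtain ⟨hga, z, hgb⟩ := GenContFract.of_partNum_eq_one_and_exists_int_partDen_eq hs
      refine ⟨z * a' + a, z * b' + b, ?_⟩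
      rw [GenContFract.contsAux_recurrence hs h₁ h₂, hga, hgb]
      simp

lemma exists_int_nums_dens (α : ℝ) (k : ℕ) : ∃ a b : ℤ,
    (GenContFract.of α).nums k = a ∧ (GenContFract.of α).dens k = b := by
  obtain ⟨-, a, b, h⟩ := exists_int_contsAux α k
  refine ⟨a, b, ?_, ?_⟩
  · rw [GenContFract.num_eq_conts_a, GenContFract.nth_cont_eq_succ_nth_contAux, h]
  · rw [GenContFract.den_eq_conts_b, GenContFract.nth_cont_eq_succ_nth_contAux, h]

lemma not_terminatedAt_of_irrational {α : ℝ} (hα : Irrational α) (k : ℕ) :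
    ¬ (GenContFract.of α).TerminatedAt k := by
  intro h
  obtain ⟨q, hq⟩ := (GenContFract.terminates_iff_rat α).1 ⟨k, h⟩
  exact hα ⟨q, hq.symm⟩

/-- Legendre's theorem for pairs that need not be coprime: `|m| |mα + n| ≥ 1/2` unless `(m, n)`
is an integer multiple of `(q_ν, -p_ν)`. -/
lemma legendre_bound {α : ℝ} (hα : Irrational α) {m n : ℤ} (hm : m ≠ 0)
    (hmn : ¬ ∃ ν : ℕ, ∃ s : ℤ, s ≠ 0 ∧
      (m : ℝ) = (s : ℝ) * (GenContFract.of α).dens ν ∧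
      (n : ℝ) = -(s : ℝ) * (GenContFract.of α).nums ν) :
    1 / 2 ≤ |(m : ℝ)| * |(m : ℝ) * α + n| := by
  by_contra! hlt
  apply hmn
  have hm' : (m : ℝ) ≠ 0 := by exact_mod_cast hm
  have hmpos : 0 < |(m : ℝ)| := abs_pos.2 hm'
  set q : ℚ := Rat.divInt (-n) m with hq
  have hqr : (q : ℝ) = -n / m := by
    rw [hq, Rat.divInt_eq_div]; push_cast; ring
  have hden : (q.den : ℝ) ≤ |(m : ℝ)| := by
    have h₁ : (q.den : ℤ) ∣ m := Rat.den_dvd (-n) m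
    have h₂ : (q.den : ℤ) ≤ |m| := Int.le_of_dvd (abs_pos.2 hm) ((dvd_abs _ _).2 h₁)
    exact_mod_cast h₂
  have hdpos : (0 : ℝ) < q.den := by exact_mod_cast q.pos
  have happrox : |α - q| < 1 / (2 * (q.den : ℝ) ^ 2) := by
    have h₁ : α - q = (m * α + n) / m := by rw [hqr]; field_simp; ring
    have h₂ : |α - q| * |(m : ℝ)| ^ 2 < 1 / 2 := by
      rw [h₁, abs_div]
      calc _ = |(m : ℝ)| * |(m : ℝ) * α + n| := by field_simp
        _ < _ := hlt
    rw [lt_div_iff₀ (by positivity)]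
    have h₃ : |α - q| * (q.den : ℝ) ^ 2 ≤ |α - q| * |(m : ℝ)| ^ 2 := by gcongr
    linarith
  obtain ⟨ν, hν⟩ := Real.exists_convs_eq_rat happrox
  obtain ⟨a, b, ha, hb⟩ := exists_int_nums_dens α ν
  obtain ⟨a', b', ha', hb'⟩ := exists_int_nums_dens α (ν + 1)
  have hnt := not_terminatedAt_of_irrational hα
  have hdet : a * b' - b * a' = (-1) ^ (ν + 1) := by
    have := (SimpContFract.of α).determinant (hnt ν)
    change (GenContFract.of α).nums ν * (GenContFract.of α).dens (ν + 1) -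
      (GenContFract.of α).dens ν * (GenContFract.of α).nums (ν + 1) = _ at this
    rw [ha, hb, ha', hb'] at this
    exact_mod_cast this
  have hcop : IsCoprime b a := by
    rcases neg_one_pow_eq_or ℤ (ν + 1) with h | h
    · exact ⟨-a', b', by linarith⟩
    · exact ⟨a', -b', by linarith⟩
  have hb0 : b ≠ 0 := by
    have h₁ := GenContFract.succ_nth_fib_le_of_nth_den (v := α) (n := ν) (Or.inr (hnt _))
    have h₂ : (0 : ℝ) < (Nat.fib (ν + 1) : ℝ) := by
      exact_mod_cast Nat.fib_pos.2 (Nat.succ_pos ν)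
    rintro rfl
    rw [hb, Int.cast_zero] at h₁
    linarith
  have hcross : a * m = -n * b := by
    have hbr : (b : ℝ) ≠ 0 := by exact_mod_cast hb0
    rw [GenContFract.conv_eq_num_div_den, ha, hb, hqr, div_eq_div_iff hbr hm'] at hν
    exact_mod_cast hν
  obtain ⟨s, hs⟩ : b ∣ m := hcop.dvd_of_dvd_mul_left ⟨-n, by linarith⟩
  refine ⟨ν, s, ?_, ?_, ?_⟩
  · rintro rfl
    simp [hs] at hm
  · rw [hb, hs]; push_cast; ring
  · have : n = -s * a := by
      apply mul_right_cancel₀ hb0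
      rw [hs] at hcross
      linarith
    rw [ha, this]; push_cast; ring

lemma exists_pos_le_of_finite {ι : Type*} [Finite ι] (f : ι → ℝ) (hf : ∀ i, 0 < f i) :
    ∃ c : ℝ, 0 < c ∧ ∀ i, c ≤ f i := by
  cases isEmpty_or_nonempty ι
  · exact ⟨1, one_pos, fun i => isEmptyElim i⟩
  · obtain ⟨i, hi⟩ := Finite.exists_min f
    exact ⟨f i, hf i, hi⟩

lemma exists_norm_bound {E F : Type*} [NormedAddCommGroup E] [NormedSpace ℝ E]
    [FiniteDimensional ℝ E] [NormedAddCommGroup F] [NormedSpace ℝ F] (f : E →ₗ[ℝ] F)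
    (hf : ∀ x, f x = 0 → x = 0) : ∃ δ : ℝ, 0 < δ ∧ ∀ x, δ * ‖x‖ ≤ ‖f x‖ := by
  obtain ⟨K, hK, h⟩ := f.exists_antilipschitzWith (LinearMap.ker_eq_bot'.2 hf)
  have hK' : (0 : ℝ) < K := hK
  refine ⟨(K : ℝ)⁻¹, by positivity, fun x => ?_⟩
  have h₁ := h.le_mul_dist x 0
  rw [dist_zero_right, map_zero, dist_zero_right] at h₁
  rw [inv_mul_le_iff₀ hK']
  exact h₁

/-- Two distinct coordinates of a point of a transversal subspace are not both small compared
with its norm, so all coordinates but the smallest one have the order of the norm. -/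
lemma smallest_mul_pow_le_prod {d : ℕ} (hd : 0 < d) (L : Submodule ℝ (Fin d → ℝ))
    (htrans : ∀ i j : Fin d, i ≠ j → ∀ x ∈ L, x i = 0 → x j = 0 → x = 0) :
    ∃ δ : ℝ, 0 < δ ∧ ∀ x ∈ L, ∃ j, |x j| * (δ * ‖x‖) ^ (d - 1) ≤ ∏ i, |x i| := by
  have hpair : ∀ p : Fin d × Fin d, ∃ δ : ℝ, 0 < δ ∧
      (p.1 ≠ p.2 → ∀ x ∈ L, δ * ‖x‖ ≤ max |x p.1| |x p.2|) := by
    rintro ⟨i, j⟩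
    by_cases hij : i = j
    · exact ⟨1, one_pos, fun h => absurd hij h⟩
    let f : L →ₗ[ℝ] ℝ × ℝ :=
      ((LinearMap.proj i).prod (LinearMap.proj j)).comp L.subtype
    obtain ⟨δ, hδ, h⟩ := exists_norm_bound f (fun x hx => by
      have h₁ : (x : Fin d → ℝ) i = 0 := congrArg Prod.fst hx
      have h₂ : (x : Fin d → ℝ) j = 0 := congrArg Prod.snd hx
      exact Subtype.ext (htrans i j hij x x.2 h₁ h₂))
    exact ⟨δ, hδ, fun _ x hx => h ⟨x, hx⟩⟩
  choose D hD hDx using hpair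
  obtain ⟨δ, hδ, hδD⟩ := exists_pos_le_of_finite D hD
  refine ⟨δ, hδ, fun x hx => ?_⟩
  have : Nonempty (Fin d) := ⟨⟨0, hd⟩⟩
  obtain ⟨j, hj⟩ := Finite.exists_min (fun i => |x i|)
  refine ⟨j, ?_⟩
  rw [← Finset.mul_prod_erase Finset.univ _ (Finset.mem_univ j)]
  gcongr
  have hcard : (Finset.univ.erase j).card = d - 1 := by simp
  rw [← hcard, ← Finset.prod_const]
  refine Finset.prod_le_prod (fun i _ => by positivity) fun i hi => ?_
  have hij : i ≠ j := Finset.ne_of_mem_erase hi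
  calc δ * ‖x‖ ≤ D (i, j) * ‖x‖ := by gcongr; exact hδD _
    _ ≤ max |x i| |x j| := hDx (i, j) hij x hx
    _ = |x i| := max_eq_left (hj i)

/-- Lower bound for a single coordinate `x j`, where `X` stands for the norm of the point of
parameters `(m, n)`: it is either `≫ 1 / X` or `≫ ψ (K X)`. -/
lemma coordinate_bound {d : ℕ} (i₀ j : Fin d) (e₁ e₂ : Fin d → ℝ)
    (he₁ : 0 < e₁ i₀) (he₂ : e₂ i₀ = 0) (ξ : ℝ)
    (hξ : j ≠ i₀ → e₂ j ≠ 0 ∧ e₁ j = -(ξ * e₂ j))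
    {α β : ℝ} (hα : Irrational α) (hξα : j ≠ i₀ → ξ * α ≠ 1)
    (ψ : ℝ → ℝ) (hψ_anti : AntitoneOn ψ (Set.Ioi 0)) {c : ℝ} (hc : 0 < c)
    (hgood : j ≠ i₀ → ∀ m n : ℤ, (m, n) ≠ (0, 0) →
      c * ψ |(n : ℝ)| < |((m : ℝ) + (n : ℝ) * β) - ξ * ((m : ℝ) * α + (n : ℝ))|)
    {K : ℝ} (hK : 0 < K) :
    ∃ c₁ : ℝ, 0 < c₁ ∧ ∀ m n : ℤ, (m, n) ≠ (0, 0) →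
      (¬ ∃ ν : ℕ, ∃ s : ℤ, s ≠ 0 ∧
          (m : ℝ) = (s : ℝ) * (GenContFract.of α).dens ν ∧
          (n : ℝ) = -(s : ℝ) * (GenContFract.of α).nums ν) →
      ∀ X : ℝ, |(m : ℝ)| ≤ K * X → |(n : ℝ)| ≤ K * X →
      c₁ ≤ |(((m : ℝ) * α + n) • e₁ + ((m : ℝ) + n * β) • e₂) j| * X ∨
      c₁ * ψ (K * X) ≤ |(((m : ℝ) * α + n) • e₁ + ((m : ℝ) + n * β) • e₂) j| := by
  have hone : ∀ k : ℤ, k ≠ 0 → (1 : ℝ) ≤ |(k : ℝ)| := fun k hk => by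
    exact_mod_cast Int.one_le_abs hk
  by_cases hj : j = i₀
  · subst hj
    refine ⟨e₁ j / (2 * K), by positivity, fun m n hmn hconv X hmX hnX => Or.inl ?_⟩
    have hx : |(((m : ℝ) * α + n) • e₁ + ((m : ℝ) + n * β) • e₂) j|
        = e₁ j * |(m : ℝ) * α + n| := by
      simp [he₂, abs_mul, abs_of_pos he₁, mul_comm]
    rw [hx, div_le_iff₀ (by positivity)]
    suffices h : 1 / 2 ≤ |(m : ℝ) * α + n| * (K * X) by nlinarith
    by_cases hm : m = 0
    · have hn : n ≠ 0 := by rintro rfl; exact hmn (by rw [hm])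
      have h₁ := hone n hn
      simp only [hm, Int.cast_zero, zero_mul, zero_add]
      nlinarith
    · calc 1 / 2 ≤ |(m : ℝ)| * |(m : ℝ) * α + n| := legendre_bound hα hm hconv
        _ ≤ (K * X) * |(m : ℝ) * α + n| := by gcongr
        _ = _ := mul_comm _ _
  · obtain ⟨hej, he⟩ := hξ hj
    have hej' : 0 < |e₂ j| := abs_pos.2 hej
    have hξα' : 0 < |1 - ξ * α| := abs_pos.2 (sub_ne_zero.2 (Ne.symm (hξα hj)))
    refine ⟨min (|e₂ j| * |1 - ξ * α| / K) (|e₂ j| * c), by positivity,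
      fun m n hmn _ X hmX hnX => ?_⟩
    have hx : |(((m : ℝ) * α + n) • e₁ + ((m : ℝ) + n * β) • e₂) j|
        = |e₂ j| * |((m : ℝ) + n * β) - ξ * ((m : ℝ) * α + n)| := by
      rw [← abs_mul]
      simp only [Pi.add_apply, Pi.smul_apply, smul_eq_mul, he]
      ring_nf
    rw [hx]
    by_cases hn : n = 0
    · left
      have hm : m ≠ 0 := by rintro rfl; exact hmn (by rw [hn])
      have h₁ := hone m hm
      refine (min_le_left _ _).trans ?_
      rw [div_le_iff₀ hK]
      have h₂ : ((m : ℝ) + (n : ℝ) * β) - ξ * ((m : ℝ) * α + n) = m * (1 - ξ * α) := by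
        rw [hn]; push_cast; ring
      rw [h₂, abs_mul]
      have h₃ : 1 ≤ |(m : ℝ)| * (K * X) := by nlinarith
      calc |e₂ j| * |1 - ξ * α| = |e₂ j| * |1 - ξ * α| * 1 := by ring
        _ ≤ |e₂ j| * |1 - ξ * α| * (|(m : ℝ)| * (K * X)) := by gcongr
        _ = _ := by ring
    · by_cases hψ : ψ (K * X) ≤ 0
      · right
        exact (mul_nonpos_of_nonneg_of_nonpos (by positivity) hψ).trans (by positivity)
      right
      have h₁ := hone n hn
      have h₂ : ψ (K * X) ≤ ψ |(n : ℝ)| :=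
        hψ_anti (Set.mem_Ioi.2 (by linarith)) (Set.mem_Ioi.2 (by linarith)) hnX
      have h₃ := hgood hj m n hmn
      push Not at hψ
      calc _ ≤ |e₂ j| * c * ψ (K * X) := by gcongr; exact min_le_right _ _
        _ ≤ |e₂ j| * c * ψ |(n : ℝ)| := by gcongr
        _ = |e₂ j| * (c * ψ |(n : ℝ)|) := by ring
        _ ≤ _ := by gcongr

/-- **First Main Lemma, part (i).** -/
theorem first_main_lemma_i (d : ℕ) (hd : 3 ≤ d)
    (L : Submodule ℝ (Fin d → ℝ)) (hdim : Module.finrank ℝ L = 2)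
    (htrans : ∀ i j : Fin d, i ≠ j → ∀ x ∈ L, x i = 0 → x j = 0 → x = 0)
    (e₁ e₂ : Fin d → ℝ) (he₁L : e₁ ∈ L) (he₂L : e₂ ∈ L)
    (he₁unit : ∑ i, (e₁ i) ^ 2 = 1) (he₂unit : ∑ i, (e₂ i) ^ 2 = 1)
    (horth : ∑ i, e₁ i * e₂ i = 0)
    (hspan : ∀ x : Fin d → ℝ, (x ∈ L ∧ x ⟨0, by omega⟩ = 0) ↔ ∃ c : ℝ, x = c • e₂)
    (he₁pos : 0 < e₁ ⟨0, by omega⟩)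
    (ξ : Fin d → ℝ)
    (hξ : ∀ j : Fin d, (j : ℕ) ≠ 0 → ∀ z₁ z₂ : ℝ,
      ((z₁ • e₁ + z₂ • e₂ : Fin d → ℝ) j = 0 ↔ z₂ = ξ j * z₁))
    (α β : ℝ) (hα : Irrational α) (hβ : Irrational β)
    (hξα : ∀ j : Fin d, (j : ℕ) ≠ 0 → ξ j * α ≠ 1)
    (hαβ : α * β ≠ 1)
    (hβξ : ∀ j : Fin d, (j : ℕ) ≠ 0 → β ≠ ξ j)
    (ψ : ℝ → ℝ) (hψ_pos : ∀ t, 0 < t → 0 < ψ t)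
    (hψ_anti : AntitoneOn ψ (Set.Ioi 0))
    (hψ_lim : Tendsto ψ atTop (nhds 0))
    (c : ℝ) (hc : 0 < c)
    (hgood : ∀ m n : ℤ, (m, n) ≠ (0, 0) → ∀ j : Fin d, (j : ℕ) ≠ 0 →
      c * ψ |(n : ℝ)| < |((m : ℝ) + (n : ℝ) * β) - ξ j * ((m : ℝ) * α + (n : ℝ))|) :
    ∃ C : ℝ, 0 < C ∧ ∃ H : ℝ, 0 < H ∧ ∀ m n : ℤ, (m, n) ≠ (0, 0) →
      (¬ ∃ ν : ℕ, ∃ s : ℤ, s ≠ 0 ∧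
          (m : ℝ) = (s : ℝ) * (GenContFract.of α).dens ν ∧
          (n : ℝ) = -(s : ℝ) * (GenContFract.of α).nums ν) →
      C * min 1 (ψ (H * ‖(((m : ℝ) * α + (n : ℝ)) • e₁ + ((m : ℝ) + (n : ℝ) * β) • e₂ :
              Fin d → ℝ)‖) *
            ‖(((m : ℝ) * α + (n : ℝ)) • e₁ + ((m : ℝ) + (n : ℝ) * β) • e₂ : Fin d → ℝ)‖ ^ (d - 1))
        ≤ ∏ j, |(((m : ℝ) * α + (n : ℝ)) • e₁ + ((m : ℝ) + (n : ℝ) * β) • e₂ : Fin d → ℝ) j| := by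
  have he₂0 : e₂ ⟨0, by omega⟩ = 0 := ((hspan e₂).2 ⟨1, (one_smul _ _).symm⟩).2
  have he₂ne : e₂ ≠ 0 := by
    rintro rfl
    simp at he₂unit
  have hcoord : ∀ j : Fin d, (j : ℕ) ≠ 0 → e₂ j ≠ 0 ∧ e₁ j = -(ξ j * e₂ j) := by
    intro j hj
    refine ⟨fun h => he₂ne (htrans j ⟨0, by omega⟩ ?_ e₂ he₂L h he₂0), ?_⟩
    · rintro rfl; exact hj rfl
    · have := (hξ j hj 1 (ξ j)).2 (by ring)
      simp at this
      linarith
  -- The parametrisation `(m, n) ↦ x`, extended to real parameters.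
  let f : ℝ × ℝ →ₗ[ℝ] (Fin d → ℝ) :=
    (α • LinearMap.fst ℝ ℝ ℝ + LinearMap.snd ℝ ℝ ℝ).smulRight e₁ +
      (LinearMap.fst ℝ ℝ ℝ + β • LinearMap.snd ℝ ℝ ℝ).smulRight e₂
  have hf : ∀ a b : ℝ, f (a, b) = (a * α + b) • e₁ + (a + b * β) • e₂ := fun a b => by
    simp [f, mul_comm]
  obtain ⟨κ, hκ, hκf⟩ := exists_norm_bound f (by
    rintro ⟨a, b⟩ hab
    rw [hf] at hab
    have h₁ : a * α + b = 0 := by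
      have := congrFun hab ⟨0, by omega⟩
      simp [he₂0, he₁pos.ne'] at this
      exact this
    rw [h₁, zero_smul, zero_add, smul_eq_zero, or_iff_left he₂ne] at hab
    have h₂ : b * (1 - α * β) = 0 := by linear_combination h₁ - α * hab
    have h₃ : b = 0 := (mul_eq_zero.1 h₂).resolve_right (sub_ne_zero.2 hαβ.symm)
    subst h₃
    simpa using hab)
  -- Enlarging the constant to at least `1` keeps `(1 / K) ^ (d - 2)` a uniform lower bound below.
  obtain ⟨K, hK1, hKf⟩ : ∃ K : ℝ, 1 ≤ K ∧ ∀ p, ‖p‖ ≤ K * ‖f p‖ := by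
    refine ⟨max 1 κ⁻¹, le_max_left _ _, fun p => ?_⟩
    calc ‖p‖ = κ⁻¹ * (κ * ‖p‖) := by field_simp
      _ ≤ max 1 κ⁻¹ * ‖f p‖ := by gcongr; exacts [le_max_right _ _, hκf p]
  have hK : 0 < K := by linarith
  have hcb := fun j : Fin d => coordinate_bound ⟨0, by omega⟩ j e₁ e₂ he₁pos he₂0 (ξ j)
    (fun h => hcoord j fun h' => h (Fin.ext h')) hα
    (fun h => hξα j fun h' => h (Fin.ext h')) ψ hψ_anti hc
    (fun h m n hmn => hgood m n hmn j fun h' => h (Fin.ext h')) hK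
  choose D hD hDx using hcb
  obtain ⟨c₁, hc₁, hc₁D⟩ := exists_pos_le_of_finite D hD
  obtain ⟨δ, hδ, hδx⟩ := smallest_mul_pow_le_prod (by omega) L htrans
  refine ⟨c₁ * δ ^ (d - 1) * K⁻¹ ^ (d - 2), by positivity, K, hK, fun m n hmn hconv => ?_⟩
  have hxL : (((m : ℝ) * α + (n : ℝ)) • e₁ + ((m : ℝ) + (n : ℝ) * β) • e₂) ∈ L :=
    L.add_mem (L.smul_mem _ he₁L) (L.smul_mem _ he₂L)
  have hbd := hKf ((m : ℝ), (n : ℝ))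
  rw [hf] at hbd
  have hDxmn := fun j => hDx j m n hmn hconv
  set x : Fin d → ℝ := ((m : ℝ) * α + (n : ℝ)) • e₁ + ((m : ℝ) + (n : ℝ) * β) • e₂ with hx
  have hm : |(m : ℝ)| ≤ K * ‖x‖ := (norm_fst_le ((m : ℝ), (n : ℝ))).trans hbd
  have hn : |(n : ℝ)| ≤ K * ‖x‖ := (norm_snd_le ((m : ℝ), (n : ℝ))).trans hbd
  have hKX : 1 ≤ K * ‖x‖ := by
    by_cases h : m = 0
    · have h' : n ≠ 0 := by rintro rfl; exact hmn (by rw [h])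
      exact le_trans (by exact_mod_cast Int.one_le_abs h') hn
    · exact le_trans (by exact_mod_cast Int.one_le_abs h) hm
  have hX : K⁻¹ ≤ ‖x‖ := (inv_le_iff_one_le_mul₀' hK).2 hKX
  have hXpos : 0 < ‖x‖ := lt_of_lt_of_le (by positivity) hX
  obtain ⟨j, hj⟩ := hδx x hxL
  refine le_trans ?_ hj
  rcases hDxmn j ‖x‖ hm hn with h | h
  · have hdd : d - 1 = (d - 2) + 1 := by omega
    calc _ ≤ c₁ * δ ^ (d - 1) * K⁻¹ ^ (d - 2) * 1 := by gcongr; exact min_le_left _ _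
      _ ≤ (|x j| * ‖x‖) * δ ^ (d - 1) * ‖x‖ ^ (d - 2) * 1 := by
        gcongr
        exact (hc₁D j).trans h
      _ = |x j| * (δ * ‖x‖) ^ (d - 1) := by
        rw [mul_pow, hdd, pow_succ ‖x‖]; ring
  · have hψ := hψ_pos (K * ‖x‖) (by positivity)
    calc _ ≤ c₁ * δ ^ (d - 1) * 1 * (ψ (K * ‖x‖) * ‖x‖ ^ (d - 1)) := by
          gcongr
          · exact pow_le_one₀ (by positivity) (inv_le_one_of_one_le₀ hK1)
          · exact min_le_right _ _
      _ = (c₁ * ψ (K * ‖x‖)) * (δ * ‖x‖) ^ (d - 1) := by rw [mul_pow]; ring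
      _ ≤ |x j| * (δ * ‖x‖) ^ (d - 1) := by
        gcongr
        exact le_trans (by gcongr; exact hc₁D j) h
end
end

section
/- Let d ≥ 3 and let 𝔏 ⊂ ℝ^d be a two-dimensional subspace with 𝔏 ∩ {x_i = 0} ∩ {x_j = 0} = {0} for all i ≠ j. Let e_1, e_2 be unit vectors in 𝔏 with e_2 spanning 𝔩_1 = 𝔏 ∩ {x_1 = 0}, e_1 ⊥ e_2, and first coordinate e_{1,1} > 0 (so that e_{2,1} = 0 and e_{2,j} ≠ 0 for j = 2,…,d). Let α, β be irrational numbers with αβ ≠ 1, and set σ = e_{1,1} ∏_{j=2}^d |e_{2,j}| > 0. Then there exists a constant C > 0 such that for every continued fraction convergent p_ν/q_ν of α and every nonzero integer s, the point x = z_1 e_1 + z_2 e_2 with z_1 = s(q_ν α − p_ν) and z_2 = s(q_ν − β p_ν) satisfies | ∏_{j=1}^d |x_j| − σ |1 − αβ|^{d−1} |s|^d q_ν^{d−1} ‖q_ν α‖ | ≤ C |s|^d q_ν^{d−2} ‖q_ν α‖², where ‖q_ν α‖ = |q_ν α − p_ν| is the distance from q_ν α to the nearest integer. -/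
/-!
Put `θ = qα − p`, so that `q ≥ 1` and `|θ| ≤ 1`. Since `q − βp = q(1 − αβ) + βθ`, the
coordinates of the point are `x_j = s q (a_j + t c_j)` with `t = θ / q`,
`a_j = (1 − αβ) e_{2,j}` and `c_j = e_{1,j} + β e_{2,j}`; the first one is exactly `s θ e_{1,1}`
because `e_{2,1} = 0`. Pulling the first coordinate out of the product leaves
`|s|^d |θ| e_{1,1} q^{d-1} ∏_{j ≥ 2} |a_j + t c_j|`. As `|t| ≤ 1`, the last product differs from
`∏_{j ≥ 2} |a_j|` by at most a constant times `|t|` (`abs_prod_abs_affine_sub_le`), and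
`q^{d-1} |t| = q^{d-2} |θ|` gives the error term.
-/

open Filter Set

noncomputable section

/-- A product of absolute values of affine functions of `t` is Lipschitz at `t = 0` on
the unit interval. -/
lemma abs_prod_abs_affine_sub_le {ι : Type*} (S : Finset ι) (a c : ι → ℝ) :
    ∃ K : ℝ, 0 ≤ K ∧ ∀ t : ℝ, |t| ≤ 1 →
      abs ((∏ j ∈ S, |a j + t * c j|) - ∏ j ∈ S, |a j|) ≤ K * |t| := by
  classical
  induction S using Finset.induction_on with
  | empty => exact ⟨0, le_rfl, fun t _ => by simp⟩
  | insert i S hi ih =>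
    obtain ⟨K, hK, h⟩ := ih
    have hP : 0 ≤ ∏ j ∈ S, |a j| := Finset.prod_nonneg fun _ _ => abs_nonneg _
    refine ⟨(|a i| + |c i|) * K + |c i| * ∏ j ∈ S, |a j|, by positivity, fun t ht => ?_⟩
    rw [Finset.prod_insert hi, Finset.prod_insert hi]
    have hK' := h t ht
    set P := ∏ j ∈ S, |a j|
    set Q := ∏ j ∈ S, |a j + t * c j|
    have h₁ : abs (|a i + t * c i| - |a i|) ≤ |c i| * |t| := by
      refine (abs_abs_sub_abs_le _ _).trans (le_of_eq ?_)
      rw [add_sub_cancel_left, abs_mul, mul_comm]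
    have h₂ : |a i + t * c i| ≤ |a i| + |c i| := by
      refine (abs_add_le _ _).trans ?_
      rw [abs_mul]
      nlinarith [abs_nonneg (c i)]
    calc abs (|a i + t * c i| * Q - |a i| * P)
        = abs (|a i + t * c i| * (Q - P) + (|a i + t * c i| - |a i|) * P) := by ring_nf
      _ ≤ |a i + t * c i| * |Q - P| + abs (|a i + t * c i| - |a i|) * P := by
          refine (abs_add_le _ _).trans (le_of_eq ?_)
          rw [abs_mul, abs_mul, abs_abs, abs_of_nonneg hP]
      _ ≤ (|a i| + |c i|) * (K * |t|) + (|c i| * |t|) * P := by gcongr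
      _ = _ := by ring

lemma one_le_dens_of (α : ℝ) (n : ℕ) : 1 ≤ (GenContFract.of α).dens n := by
  induction n with
  | zero => simp
  | succ n ih => exact ih.trans GenContFract.of_den_mono

lemma abs_dens_mul_sub_nums_le_one {α : ℝ} (hα : Irrational α) (n : ℕ) :
    |(GenContFract.of α).dens n * α - (GenContFract.of α).nums n| ≤ 1 := by
  have hterm : ¬ (GenContFract.of α).TerminatedAt n := fun h =>
    have ⟨r, hr⟩ := (GenContFract.terminates_iff_rat α).1 ⟨n, h⟩
    hα ⟨r, hr.symm⟩
  have h := GenContFract.abs_sub_convs_le hterm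
  rw [GenContFract.conv_eq_num_div_den] at h
  have hq := one_le_dens_of α n
  have hq' := one_le_dens_of α (n + 1)
  set q := (GenContFract.of α).dens n
  set q' := (GenContFract.of α).dens (n + 1)
  set p := (GenContFract.of α).nums n
  have hq0 : 0 < q := by linarith
  have hq'0 : 0 < q' := by linarith
  calc |q * α - p| = q * |α - p / q| := by
        rw [← abs_of_pos hq0, ← abs_mul, abs_of_pos hq0]
        congr 1
        field_simp
    _ ≤ q * (1 / (q * q')) := by gcongr
    _ = 1 / q' := by field_simp
    _ ≤ 1 := by rw [div_le_one hq'0]; exact hq'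

/-- **First Main Lemma, part (ii).** With `σ = e_{1,1} ∏_{j≥2} |e_{2,j}|`, for
every convergent `p_ν/q_ν` of `α` and every nonzero integer `s`, the lattice point
`x = s(q_ν α − p_ν) e₁ + s(q_ν − β p_ν) e₂` satisfies
`∏_j |x_j| = σ |1−αβ|^{d−1} |s|^d q_ν^{d−1} ‖q_ν α‖ + O(|s|^d q_ν^{d−2} ‖q_ν α‖²)`. -/
theorem first_main_lemma_ii (d : ℕ) (hd : 3 ≤ d)
    (L : Submodule ℝ (Fin d → ℝ)) (hdim : Module.finrank ℝ L = 2)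
    (htrans : ∀ i j : Fin d, i ≠ j → ∀ x ∈ L, x i = 0 → x j = 0 → x = 0)
    (e₁ e₂ : Fin d → ℝ) (he₁L : e₁ ∈ L) (he₂L : e₂ ∈ L)
    (he₁unit : ∑ i, (e₁ i) ^ 2 = 1) (he₂unit : ∑ i, (e₂ i) ^ 2 = 1)
    (horth : ∑ i, e₁ i * e₂ i = 0)
    (hspan : ∀ x : Fin d → ℝ, (x ∈ L ∧ x ⟨0, by omega⟩ = 0) ↔ ∃ c : ℝ, x = c • e₂)
    (he₁pos : 0 < e₁ ⟨0, by omega⟩)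
    (he₂zero : e₂ ⟨0, by omega⟩ = 0)
    (he₂ne : ∀ j : Fin d, (j : ℕ) ≠ 0 → e₂ j ≠ 0)
    (α β : ℝ) (hα : Irrational α) (hβ : Irrational β) (hαβ : α * β ≠ 1) :
    ∃ C : ℝ, 0 < C ∧ ∀ ν : ℕ, ∀ s : ℤ, s ≠ 0 →
      ∀ q p : ℝ, q = (GenContFract.of α).dens ν → p = (GenContFract.of α).nums ν →
        abs ((∏ j, |(((s : ℝ) * (q * α - p)) • e₁ + ((s : ℝ) * (q - β * p)) • e₂ : Fin d → ℝ) j|) -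
            (e₁ ⟨0, by omega⟩ * ∏ j ∈ Finset.univ.erase (⟨0, by omega⟩ : Fin d), |e₂ j|) *
              |1 - α * β| ^ (d - 1) * |(s : ℝ)| ^ d * q ^ (d - 1) * |q * α - p|) ≤
          C * |(s : ℝ)| ^ d * q ^ (d - 2) * |q * α - p| ^ 2 := by
  set i₀ : Fin d := ⟨0, by omega⟩ with hi₀
  obtain ⟨K, hK, hlip⟩ := abs_prod_abs_affine_sub_le (Finset.univ.erase i₀)
    (fun j => (1 - α * β) * e₂ j) (fun j => e₁ j + β * e₂ j)
  -- The summand `1` only serves to make the constant positive.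
  refine ⟨e₁ i₀ * K + 1, by positivity, ?_⟩
  intro ν s hs q p hq hp
  have hq1 : 1 ≤ q := hq ▸ one_le_dens_of α ν
  have hθ : |q * α - p| ≤ 1 := by
    rw [hq, hp]
    exact abs_dens_mul_sub_nums_le_one hα ν
  have hq0 : 0 < q := by linarith
  obtain ⟨m, rfl⟩ : ∃ m, d = m + 2 := ⟨d - 2, by omega⟩
  have hcard : (Finset.univ.erase i₀).card = m + 1 := by
    rw [Finset.card_erase_of_mem (Finset.mem_univ _)]
    simp
  set θ := q * α - p with hθdef
  have ht : |θ / q| = |θ| / q := by rw [abs_div, abs_of_pos hq0]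
  have h := hlip (θ / q) (by rw [ht, div_le_one hq0]; linarith)
  have hA : ∏ j ∈ Finset.univ.erase i₀, |(1 - α * β) * e₂ j| =
      |1 - α * β| ^ (m + 1) * ∏ j ∈ Finset.univ.erase i₀, |e₂ j| := by
    simp_rw [abs_mul]
    rw [Finset.prod_mul_distrib, Finset.prod_const, hcard]
  have hX : ∏ j, |(((s : ℝ) * θ) • e₁ + ((s : ℝ) * (q - β * p)) • e₂ : Fin (m + 2) → ℝ) j| =
      |(s : ℝ)| * |θ| * e₁ i₀ * ((|(s : ℝ)| * q) ^ (m + 1) *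
        ∏ j ∈ Finset.univ.erase i₀, |(1 - α * β) * e₂ j + θ / q * (e₁ j + β * e₂ j)|) := by
    rw [← Finset.mul_prod_erase _ _ (Finset.mem_univ i₀)]
    congr 1
    · simp [he₂zero, abs_mul, abs_of_pos he₁pos]
    · rw [← hcard, ← Finset.prod_const, ← Finset.prod_mul_distrib]
      refine Finset.prod_congr rfl fun j _ => ?_
      have hx : (((s : ℝ) * θ) • e₁ + ((s : ℝ) * (q - β * p)) • e₂) j =
          s * q * ((1 - α * β) * e₂ j + θ / q * (e₁ j + β * e₂ j)) := by
        simp only [Pi.add_apply, Pi.smul_apply, smul_eq_mul]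
        field_simp
        rw [hθdef]
        ring
      rw [hx, abs_mul, abs_mul, abs_of_pos hq0]
  rw [hX]
  rw [hA, ht] at h
  set P := ∏ j ∈ Finset.univ.erase i₀, |e₂ j|
  set Q := ∏ j ∈ Finset.univ.erase i₀, |(1 - α * β) * e₂ j + θ / q * (e₁ j + β * e₂ j)|
  have e1 : m + 2 - 1 = m + 1 := rfl
  have e2 : m + 2 - 2 = m := rfl
  rw [e1, e2]
  calc _ = abs (|(s : ℝ)| ^ (m + 2) * |θ| * e₁ i₀ * q ^ (m + 1) *
          (Q - |1 - α * β| ^ (m + 1) * P)) := by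
        congr 1
        ring
    _ = |(s : ℝ)| ^ (m + 2) * |θ| * e₁ i₀ * q ^ (m + 1) *
          abs (Q - |1 - α * β| ^ (m + 1) * P) := by
        rw [abs_mul, abs_of_nonneg (by positivity)]
    _ ≤ |(s : ℝ)| ^ (m + 2) * |θ| * e₁ i₀ * q ^ (m + 1) * (K * (|θ| / q)) := by gcongr
    _ = e₁ i₀ * K * |(s : ℝ)| ^ (m + 2) * q ^ m * |θ| ^ 2 := by
        field_simp
        ring
    _ ≤ _ := by
        gcongr
        linarith
end
end
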